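/- Let θ be an irrational real number. Then the fractional parts of p θ, as p ranges over the primes, are uniformly distributed in (0,1): for every 0 ≤ a < b ≤ 1, the number of primes p among the first ℓ primes with frac(pθ) ∈ (a,b), divided by ℓ, tends to b − a as ℓ → ∞. -/

import Mathlib

open Filter Finset


/-- `f` is a finite divisor sum over moduli composed of primes in `P`. -/
def DS (P : Finset ℕ) (D B : ℝ) (f : ℕ → ℝ) (v : ℝ) : Prop :=
  ∃ (ι : Type) (_ : Fintype ι) (c : ι → ℝ) (d : ι → ℕ),
    (∀ i, 0 < d i ∧ (d i : ℝ) ≤ D ∧ (d i).primeFactors ⊆ P) ∧ (∑ i, |c i| ≤ B) ∧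
    (∀ n, f n = ∑ i, c i * (if d i ∣ n then 1 else 0)) ∧ v = ∑ i, c i / d i

/-- indicator of the integers free of prime factors from `P`. -/
noncomputable def ind (P : Finset ℕ) (n : ℕ) : ℝ := by
  classical exact if ∀ p ∈ P, ¬ p ∣ n then 1 else 0

lemma DS.mono {P P' : Finset ℕ} {D D' B B' : ℝ} {f : ℕ → ℝ} {v : ℝ} (h : DS P D B f v)
    (hP : P ⊆ P') (hD : D ≤ D') (hB : B ≤ B') : DS P' D' B' f v := by
  obtain ⟨ι, _, c, d, h1, h2, h3, h4⟩ := h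
  exact ⟨ι, _, c, d, fun i => ⟨(h1 i).1, (h1 i).2.1.trans hD, (h1 i).2.2.trans hP⟩,
    h2.trans hB, h3, h4⟩

lemma DS.mul {P P' : Finset ℕ} {D D' B B' : ℝ} {f g : ℕ → ℝ} {v v' : ℝ} (h : DS P D B f v)
    (h' : DS P' D' B' g v') (hd : Disjoint P P') :
    DS (P ∪ P') (D * D') (B * B') (fun n => f n * g n) (v * v') := by
  obtain ⟨ι, _, c, d, h1, h2, h3, h4⟩ := h
  obtain ⟨κ, _, c', d', h1', h2', h3', h4'⟩ := h'
  refine ⟨ι × κ, inferInstance, fun x => c x.1 * c' x.2, fun x => d x.1 * d' x.2, ?_, ?_, ?_, ?_⟩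
  · rintro ⟨i, j⟩
    refine ⟨Nat.mul_pos (h1 i).1 (h1' j).1, ?_, ?_⟩
    · push_cast
      exact mul_le_mul (h1 i).2.1 (h1' j).2.1 (by positivity)
        (le_trans (by positivity) (h1 i).2.1)
    · rw [Nat.primeFactors_mul (h1 i).1.ne' (h1' j).1.ne']
      exact Finset.union_subset_union (h1 i).2.2 (h1' j).2.2
  · simp only [abs_mul, Fintype.sum_prod_type, ← Finset.mul_sum, ← Finset.sum_mul]
    exact mul_le_mul h2 h2' (Finset.sum_nonneg fun _ _ => abs_nonneg _)
      (le_trans (Finset.sum_nonneg fun _ _ => abs_nonneg _) h2)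
  · intro n
    dsimp only
    rw [h3, h3', Finset.sum_mul_sum, Fintype.sum_prod_type]
    refine Finset.sum_congr rfl fun i _ => Finset.sum_congr rfl fun j _ => ?_
    have hc : Nat.Coprime (d i) (d' j) := by
      rw [← Nat.disjoint_primeFactors (h1 i).1.ne' (h1' j).1.ne']
      exact Finset.disjoint_of_subset_left (h1 i).2.2
        (Finset.disjoint_of_subset_right (h1' j).2.2 hd)
    have : (d i * d' j ∣ n) ↔ (d i ∣ n ∧ d' j ∣ n) :=
      ⟨fun h => ⟨dvd_of_mul_right_dvd h, dvd_of_mul_left_dvd h⟩,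
        fun h => hc.mul_dvd_of_dvd_of_dvd h.1 h.2⟩
    simp only [this]
    by_cases a1 : d i ∣ n <;> by_cases a2 : d' j ∣ n <;> simp [a1, a2]
  · rw [h4, h4', Finset.sum_mul_sum, Fintype.sum_prod_type]
    refine Finset.sum_congr rfl fun i _ => Finset.sum_congr rfl fun j _ => ?_
    push_cast
    rw [div_mul_div_comm]

lemma DS.add {P : Finset ℕ} {D B B' : ℝ} {f g : ℕ → ℝ} {v v' : ℝ} (h : DS P D B f v)
    (h' : DS P D B' g v') :
    DS P D (B + B') (fun n => f n + g n) (v + v') := by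
  obtain ⟨ι, _, c, d, h1, h2, h3, h4⟩ := h
  obtain ⟨κ, _, c', d', h1', h2', h3', h4'⟩ := h'
  refine ⟨ι ⊕ κ, inferInstance, Sum.elim c c', Sum.elim d d', ?_, ?_, ?_, ?_⟩
  · rintro (i | j)
    · exact h1 i
    · exact h1' j
  · simp only [Fintype.sum_sum_type, Sum.elim_inl, Sum.elim_inr]; linarith
  · intro n
    simp only [Fintype.sum_sum_type, Sum.elim_inl, Sum.elim_inr]; rw [h3, h3']; congr!
  · simp only [Fintype.sum_sum_type, Sum.elim_inl, Sum.elim_inr]; rw [h4, h4']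

lemma DS.neg {P : Finset ℕ} {D B : ℝ} {f : ℕ → ℝ} {v : ℝ} (h : DS P D B f v) :
    DS P D B (fun n => - f n) (-v) := by
  obtain ⟨ι, _, c, d, h1, h2, h3, h4⟩ := h
  refine ⟨ι, inferInstance, fun i => - c i, d, h1, by simpa using h2, ?_, ?_⟩
  · intro n
    dsimp only
    rw [h3, ← Finset.sum_neg_distrib]
    exact Finset.sum_congr rfl fun i _ => by ring
  · rw [h4]; simp [neg_div]

lemma ap_count (a b r v : ℕ) (hr : 0 < r) (hab : a ≤ b) :
    |(((Finset.Ioc a b).filter (fun x => x ≡ v [MOD r])).card : ℝ) - ((b : ℝ) - a) / r| ≤ 1 := by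
  have h := Nat.Ioc_filter_modEq_card a b hr v
  have hr' : (0 : ℝ) < r := by exact_mod_cast hr
  set X : ℚ := ((b : ℚ) - v) / r with hX
  set Y : ℚ := ((a : ℚ) - v) / r with hY
  have hXY : Y ≤ X := by
    rw [hX, hY]; gcongr
  have hm : max (⌊X⌋ - ⌊Y⌋) 0 = ⌊X⌋ - ⌊Y⌋ := by
    apply max_eq_left
    have := Int.floor_mono hXY
    omega
  rw [hm] at h
  have h' : (((Finset.Ioc a b).filter (fun x => x ≡ v [MOD r])).card : ℝ) = (⌊X⌋ : ℝ) - ⌊Y⌋ := by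
    exact_mod_cast h
  rw [h']
  have e : ((b : ℝ) - a) / r = (X : ℝ) - Y := by
    rw [hX, hY]; push_cast; ring
  rw [e]
  have x1 : ((⌊X⌋ : ℚ) : ℝ) ≤ X := by exact_mod_cast Int.floor_le X
  have x2 : (X : ℝ) < ((⌊X⌋ : ℚ) : ℝ) + 1 := by exact_mod_cast Int.lt_floor_add_one X
  have y1 : ((⌊Y⌋ : ℚ) : ℝ) ≤ Y := by exact_mod_cast Int.floor_le Y
  have y2 : (Y : ℝ) < ((⌊Y⌋ : ℚ) : ℝ) + 1 := by exact_mod_cast Int.lt_floor_add_one Y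
  push_cast at x1 x2 y1 y2
  rw [abs_le]; constructor <;> linarith

/-- Sum of a divisor sum in an arithmetic progression. -/
lemma DS.ap {P : Finset ℕ} {D B : ℝ} {f : ℕ → ℝ} {v : ℝ} (h : DS P D B f v) (q : ℕ) (hq : 0 < q)
    (hP : ∀ p ∈ P, ¬ p ∣ q) (a b r : ℕ) (hab : a ≤ b) :
    |(∑ n ∈ (Finset.Ioc a b).filter (fun x => x ≡ r [MOD q]), f n) - ((b : ℝ) - a) / q * v| ≤ B := by
  obtain ⟨ι, _, c, d, h1, h2, h3, h4⟩ := h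
  have key : ∀ i, |(∑ n ∈ (Finset.Ioc a b).filter (fun x => x ≡ r [MOD q]),
      (if d i ∣ n then (1 : ℝ) else 0)) - ((b : ℝ) - a) / q / d i| ≤ 1 := by
    intro i
    have hc : Nat.Coprime (d i) q := by
      rw [← Nat.disjoint_primeFactors (h1 i).1.ne' hq.ne', Finset.disjoint_left]
      intro p hp hp'
      exact hP p ((h1 i).2.2 hp) (Nat.dvd_of_mem_primeFactors hp')
    obtain ⟨k, hk1, hk2⟩ := Nat.chineseRemainder hc 0 r
    rw [← Finset.sum_filter, Finset.sum_const, nsmul_eq_mul, mul_one, Finset.filter_filter]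
    have e : (Finset.Ioc a b).filter (fun x => x ≡ r [MOD q] ∧ d i ∣ x) =
        (Finset.Ioc a b).filter (fun x => x ≡ k [MOD (d i * q)]) := by
      apply Finset.filter_congr
      intro x _
      rw [← Nat.modEq_and_modEq_iff_modEq_mul hc]
      constructor
      · rintro ⟨u1, u2⟩
        exact ⟨((Nat.modEq_zero_iff_dvd).2 u2).trans hk1.symm, u1.trans hk2.symm⟩
      · rintro ⟨u1, u2⟩
        exact ⟨u2.trans hk2, (Nat.modEq_zero_iff_dvd).1 (u1.trans hk1)⟩
    rw [e]
    have := ap_count a b (d i * q) k (Nat.mul_pos (h1 i).1 hq) hab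
    push_cast at this
    rw [div_div, mul_comm (q : ℝ)]
    exact this
  have e : (∑ n ∈ (Finset.Ioc a b).filter (fun x => x ≡ r [MOD q]), f n) - ((b : ℝ) - a) / q * v
      = ∑ i, c i * ((∑ n ∈ (Finset.Ioc a b).filter (fun x => x ≡ r [MOD q]),
      (if d i ∣ n then (1 : ℝ) else 0)) - ((b : ℝ) - a) / q / d i) := by
    simp only [mul_sub, Finset.sum_sub_distrib, h3, h4, Finset.mul_sum]
    rw [Finset.sum_comm]
    congr 1
    refine Finset.sum_congr rfl fun i _ => ?_
    ring
  rw [e]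
  refine (Finset.abs_sum_le_sum_abs _ _).trans (le_trans ?_ h2)
  refine Finset.sum_le_sum fun i _ => ?_
  rw [abs_mul]
  exact mul_le_of_le_one_right (abs_nonneg _) (key i)

lemma DS.all {P : Finset ℕ} {D B : ℝ} {f : ℕ → ℝ} {v : ℝ} (h : DS P D B f v)
    (hP : ∀ p ∈ P, p.Prime) (X : ℕ) : |(∑ n ∈ Finset.Ioc 0 X, f n) - X * v| ≤ B := by
  have := h.ap 1 one_pos (fun p hp => by
    have := (hP p hp).one_lt
    intro h; have := Nat.le_of_dvd one_pos h; omega) 0 X 0 (Nat.zero_le _)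
  simpa [Nat.modEq_one] using this

lemma DS.nonneg {P : Finset ℕ} {D B : ℝ} {f : ℕ → ℝ} {v : ℝ} (h : DS P D B f v)
    (hP : ∀ p ∈ P, p.Prime) (hf : ∀ n, 0 ≤ f n) : 0 ≤ v := by
  by_contra hv
  push Not at hv
  obtain ⟨X, hX⟩ := exists_nat_gt (B / (-v))
  have := h.all hP X
  rw [div_lt_iff₀ (by linarith)] at hX
  have h2 : 0 ≤ ∑ n ∈ Finset.Ioc 0 X, f n := Finset.sum_nonneg fun n _ => hf n
  have := (abs_le.1 this).2
  nlinarith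

lemma DS.le {P P' : Finset ℕ} {D B D' B' : ℝ} {f g : ℕ → ℝ} {v v' : ℝ} (h : DS P D B f v)
    (h' : DS P' D' B' g v') (hP : ∀ p ∈ P, p.Prime) (hP' : ∀ p ∈ P', p.Prime)
    (hfg : ∀ n, f n ≤ g n) : v ≤ v' := by
  have h1 := h.neg.mono (Finset.subset_union_left (s₂ := P')) (le_max_left D D') le_rfl
  have h2 := h'.mono (Finset.subset_union_right (s₁ := P)) (le_max_right D D') le_rfl
  have := (h2.add h1).nonneg (by
    intro p hp
    rcases Finset.mem_union.1 hp with hp | hp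
    · exact hP p hp
    · exact hP' p hp) (fun n => by have := hfg n; simp; linarith)
  linarith

/-- A general family: sum over subsets satisfying a size condition. -/
lemma DS.subsets (P : Finset ℕ) (hP : ∀ p ∈ P, p.Prime) (z : ℝ) (hz : 1 ≤ z)
    (hPz : ∀ p ∈ P, (p : ℝ) ≤ z)
    (T : Finset (Finset ℕ)) (hT : T ⊆ P.powerset) (k : ℕ) (hk : ∀ S ∈ T, S.card ≤ k)
    (s : Finset ℕ → ℝ) (hs : ∀ S, |s S| ≤ 1) :
    DS P (z ^ k) T.card (fun n => ∑ S ∈ T, s S * (if ∀ p ∈ S, p ∣ n then 1 else 0))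
      (∑ S ∈ T, s S * ∏ p ∈ S, (1 / (p : ℝ))) := by
  refine ⟨T, inferInstance, fun S => s S, fun S => ∏ p ∈ (S : Finset ℕ), p, ?_, ?_, ?_, ?_⟩
  · rintro ⟨S, hS⟩
    have hSP := Finset.mem_powerset.1 (hT hS)
    refine ⟨Finset.prod_pos fun p hp => (hP p (hSP hp)).pos, ?_, ?_⟩
    · push_cast
      calc ∏ p ∈ S, (p : ℝ) ≤ ∏ p ∈ S, z :=
            Finset.prod_le_prod (fun _ _ => by positivity) fun p hp => hPz p (hSP hp)
        _ = z ^ S.card := by simp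
        _ ≤ z ^ k := pow_le_pow_right₀ hz (hk S hS)
    · rw [Nat.primeFactors_prod fun p hp => hP p (hSP hp)]
      exact hSP
  · calc ∑ i : T, |s i| ≤ ∑ i : T, (1 : ℝ) := Finset.sum_le_sum fun i _ => hs i
      _ = T.card := by simp
  · intro n
    dsimp only
    rw [← Finset.sum_coe_sort T]
    refine Finset.sum_congr rfl fun S _ => ?_
    have : (∏ p ∈ (S : Finset ℕ), p ∣ n) ↔ ∀ p ∈ (S : Finset ℕ), p ∣ n := by
      constructor
      · intro h p hp
        exact (Finset.dvd_prod_of_mem _ hp).trans h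
      · intro h
        exact Finset.prod_primes_dvd n (fun p hp =>
          (hP p (Finset.mem_powerset.1 (hT S.2) hp)).prime) h
    simp only [this]
  · rw [← Finset.sum_coe_sort T]
    refine Finset.sum_congr rfl fun S _ => ?_
    push_cast
    rw [Finset.prod_div_distrib]
    simp [div_eq_mul_inv]

lemma subset_sum_eq (P : Finset ℕ) (n : ℕ) (F : ℕ → ℝ) (q : ℕ → Prop) [DecidablePred q] :
    ∑ S ∈ P.powerset.filter (fun S => q S.card), F S.card * (if ∀ p ∈ S, p ∣ n then 1 else 0)
      = ∑ i ∈ Finset.range ((P.filter (· ∣ n)).card + 1),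
          ((P.filter (· ∣ n)).card.choose i : ℝ) * (if q i then F i else 0) := by
  have h := Finset.sum_powerset_apply_card (fun i => if q i then F i else 0)
    (x := P.filter (· ∣ n))
  simp only [nsmul_eq_mul] at h
  rw [← h, Finset.sum_filter]
  have e : (P.filter (· ∣ n)).powerset = P.powerset.filter (fun S => ∀ p ∈ S, p ∣ n) := by
    ext S
    simp only [Finset.mem_powerset, Finset.mem_filter]
    constructor
    · intro h
      exact ⟨fun p hp => (Finset.mem_filter.1 (h hp)).1, fun p hp => (Finset.mem_filter.1 (h hp)).2⟩
    · rintro ⟨h1, h2⟩ p hp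
      exact Finset.mem_filter.2 ⟨h1 hp, h2 p hp⟩
  rw [e, Finset.sum_filter]
  refine Finset.sum_congr rfl fun S _ => ?_
  by_cases a1 : q S.card <;> by_cases a2 : ∀ p ∈ S, p ∣ n <;> simp [a1, a2]

lemma ind_eq (P : Finset ℕ) (n : ℕ) : ind P n = if (P.filter (· ∣ n)).card = 0 then 1 else 0 := by
  unfold ind
  simp only [Finset.card_eq_zero, Finset.filter_eq_empty_iff]

/-- Legendre. -/
lemma DS.leg (P : Finset ℕ) (hP : ∀ p ∈ P, p.Prime) (z : ℝ) (hz : 1 ≤ z)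
    (hPz : ∀ p ∈ P, (p : ℝ) ≤ z) :
    DS P (z ^ P.card) (2 ^ P.card) (ind P) (∏ p ∈ P, (1 - 1 / (p : ℝ))) := by
  have h := DS.subsets P hP z hz hPz (P.powerset.filter (fun S => True)) (by simp) P.card
    (fun S hS => Finset.card_le_card (by simpa using hS)) (fun S => (-1) ^ S.card)
    (by simp)
  have e1 : (fun n => ∑ S ∈ P.powerset.filter (fun S => True), (-1 : ℝ) ^ S.card *
      (if ∀ p ∈ S, p ∣ n then 1 else 0)) = ind P := by
    funext n
    rw [subset_sum_eq P n (fun i => (-1) ^ i) (fun _ => True), ind_eq]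
    have := Int.alternating_sum_range_choose (n := (P.filter (· ∣ n)).card)
    have h2 := congrArg (Int.cast : ℤ → ℝ) this
    push_cast at h2
    simp only [if_true]
    rw [← h2]
    exact Finset.sum_congr rfl fun _ _ => mul_comm _ _
  rw [e1] at h
  convert h using 1
  · simp
  · have := Finset.prod_one_add (f := fun p : ℕ => - (1 / (p : ℝ))) P
    simp only [← sub_eq_add_neg] at this
    rw [this]
    simp only [Finset.filter_true]
    refine Finset.sum_congr rfl fun S _ => ?_
    rw [Finset.prod_neg]

lemma sum_choose_le (t k : ℕ) : ∑ i ∈ Finset.range (k + 1), t.choose i ≤ (t + 1) ^ k := by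
  induction k with
  | zero => simp
  | succ k ih =>
    rw [Finset.sum_range_succ, pow_succ]
    have h1 : t.choose (k + 1) ≤ t ^ (k + 1) := Nat.choose_le_pow t (k + 1)
    have h2 : t ^ (k + 1) ≤ (t + 1) ^ k * t := by
      rw [pow_succ]; gcongr; omega
    nlinarith

lemma bonf (ν b : ℕ) : (if ν = 0 then (1 : ℝ) else 0) ≤
      ∑ i ∈ Finset.range (ν + 1), (ν.choose i : ℝ) * (if i ≤ 2 * b then (-1) ^ i else 0) ∧
    ∑ i ∈ Finset.range (ν + 1), (ν.choose i : ℝ) * (if i ≤ 2 * b then (-1) ^ i else 0) ≤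
      (if ν = 0 then (1 : ℝ) else 0) + ν.choose (2 * b + 1) := by
  rcases ν with _ | n
  · simp
  have e : ∑ i ∈ Finset.range (n + 1 + 1), ((n + 1).choose i : ℝ) * (if i ≤ 2 * b then (-1) ^ i else 0)
      = n.choose (2 * b) := by
    have := Int.alternating_sum_range_choose_eq_choose (n := n) (m := 2 * b)
    have h2 := congrArg (Int.cast : ℤ → ℝ) this
    push_cast at h2
    rw [pow_mul] at h2
    simp only [even_two, Even.neg_pow, one_pow, one_mul] at h2
    rw [← h2]
    have h3 : ∀ m, ∑ i ∈ Finset.range m, ((n + 1).choose i : ℝ) * (if i ≤ 2 * b then (-1) ^ i else 0)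
        = ∑ i ∈ (Finset.range m).filter (· ≤ 2 * b), ((-1) ^ i * (n + 1).choose i : ℝ) := by
      intro m
      rw [Finset.sum_filter]
      refine Finset.sum_congr rfl fun i _ => ?_
      split_ifs <;> ring
    rw [h3]
    refine Finset.sum_subset ?_ ?_
    · intro i hi
      simp only [Finset.mem_filter, Finset.mem_range] at hi ⊢
      omega
    · intro i hi hi'
      simp only [Finset.mem_filter, Finset.mem_range, not_and] at hi hi'
      have : n + 1 < i := by
        by_contra hcon
        exact hi' (by omega) (by omega)
      rw [Nat.choose_eq_zero_of_lt this]; simp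
  rw [e]
  simp only [Nat.add_eq_zero_iff, one_ne_zero, and_false, if_false, zero_add]
  refine ⟨by positivity, ?_⟩
  have : n.choose (2 * b) ≤ (n + 1).choose (2 * b + 1) := by
    rw [Nat.choose_succ_succ]; omega
  exact_mod_cast this

lemma one_sub_ge_exp (x : ℝ) (h0 : 0 ≤ x) (h1 : x ≤ 1 / 2) : Real.exp (-(2 * x)) ≤ 1 - x := by
  have h2 : 2 * x + 1 ≤ Real.exp (2 * x) := Real.add_one_le_exp _
  have h3 : 1 ≤ Real.exp (2 * x) * (1 - x) := by nlinarith
  have h4 : Real.exp (-(2 * x)) * Real.exp (2 * x) = 1 := by rw [← Real.exp_add]; simp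
  have h5 := Real.exp_pos (-(2 * x))
  nlinarith

/-- One block of the Brun-Hooley sieve. -/
lemma block (P : Finset ℕ) (hP : ∀ p ∈ P, p.Prime) (z : ℝ) (hz : 1 ≤ z)
    (hPz : ∀ p ∈ P, (p : ℝ) ≤ z) (hcard : (P.card : ℝ) + 1 ≤ z) (L : ℝ)
    (hL : ∑ p ∈ P, 1 / (p : ℝ) ≤ L) (b : ℕ) :
    ∃ (w e : ℕ → ℝ) (vw ve : ℝ), DS P (z ^ (2 * b + 1)) (z ^ (2 * b + 1)) w vw ∧
      DS P (z ^ (2 * b + 1)) (z ^ (2 * b + 1)) e ve ∧ (∀ n, ind P n ≤ w n) ∧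
      (∀ n, w n ≤ ind P n + e n) ∧ (∀ n, 0 ≤ e n) ∧
      vw ≤ (∏ p ∈ P, (1 - 1 / (p : ℝ))) * (1 + Real.exp (4 * L) * (1 / 4) ^ b) ∧
      ve ≤ (∏ p ∈ P, (1 - 1 / (p : ℝ))) * (Real.exp (4 * L) * (1 / 4) ^ b) := by
  have hw := DS.subsets P hP z hz hPz (P.powerset.filter (fun S => S.card ≤ 2 * b)) (by simp) (2 * b + 1)
    (fun S hS => by have := (Finset.mem_filter.1 hS).2; omega) (fun S => (-1) ^ S.card)
    (by simp)
  have he := DS.subsets P hP z hz hPz (P.powerset.filter (fun S => S.card = 2 * b + 1)) (by simp) (2 * b + 1)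
    (fun S hS => (Finset.mem_filter.1 hS).2.le) (fun S => 1) (by simp)
  have hcz : ((P.card + 1 : ℕ) : ℝ) ≤ z := by push_cast; exact hcard
  have hw' := hw.mono (Finset.Subset.refl _) le_rfl (B' := z ^ (2 * b + 1)) (by
    have h1 : (P.powerset.filter (fun S => S.card ≤ 2 * b)).card ≤ (P.card + 1) ^ (2 * b) := by
      refine le_trans ?_ (sum_choose_le P.card (2 * b))
      have : P.powerset.filter (fun S => S.card ≤ 2 * b) ⊆
          (Finset.range (2 * b + 1)).biUnion (fun i => Finset.powersetCard i P) := by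
        intro S hS
        rw [Finset.mem_filter, Finset.mem_powerset] at hS
        exact Finset.mem_biUnion.2 ⟨S.card, Finset.mem_range.2 (by omega),
          Finset.mem_powersetCard.2 ⟨hS.1, rfl⟩⟩
      refine (Finset.card_le_card this).trans (Finset.card_biUnion_le.trans (le_of_eq ?_))
      simp
    calc ((P.powerset.filter (fun S => S.card ≤ 2 * b)).card : ℝ) ≤ ((P.card + 1 : ℕ) : ℝ) ^ (2 * b) := by
          exact_mod_cast h1
      _ ≤ z ^ (2 * b) := by gcongr
      _ ≤ z ^ (2 * b + 1) := pow_le_pow_right₀ hz (by omega))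
  have he' := he.mono (Finset.Subset.refl _) le_rfl (B' := z ^ (2 * b + 1)) (by
    have h1 : (P.powerset.filter (fun S => S.card = 2 * b + 1)).card ≤ (P.card + 1) ^ (2 * b + 1) := by
      have : P.powerset.filter (fun S => S.card = 2 * b + 1) = Finset.powersetCard (2 * b + 1) P := by
        ext S; simp [Finset.mem_powersetCard]
      rw [this, Finset.card_powersetCard]
      exact (Nat.choose_le_pow _ _).trans (Nat.pow_le_pow_left (by omega) _)
    calc ((P.powerset.filter (fun S => S.card = 2 * b + 1)).card : ℝ)
          ≤ ((P.card + 1 : ℕ) : ℝ) ^ (2 * b + 1) := by exact_mod_cast h1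
      _ ≤ z ^ (2 * b + 1) := by gcongr)
  set w : ℕ → ℝ := _ with hwdef
  set vw : ℝ := _ with hvw
  change DS P _ _ w vw at hw'
  set e : ℕ → ℝ := _ with hedef
  set ve : ℝ := _ with hve
  change DS P _ _ e ve at he'
  have hw1 : ∀ n, w n = ∑ i ∈ Finset.range ((P.filter (· ∣ n)).card + 1),
          ((P.filter (· ∣ n)).card.choose i : ℝ) * (if i ≤ 2 * b then (-1) ^ i else 0) := by
    intro n
    exact subset_sum_eq P n (fun i => (-1) ^ i) (fun i => i ≤ 2 * b)
  have he1 : ∀ n, e n = (P.filter (· ∣ n)).card.choose (2 * b + 1) := by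
    intro n
    have := subset_sum_eq P n (fun i => 1) (fun i => i = 2 * b + 1)
    rw [show e n = _ from this]
    simp only [mul_ite, mul_one, mul_zero]
    rw [Finset.sum_ite_eq']
    split_ifs with h
    · rfl
    · rw [Nat.choose_eq_zero_of_lt]
      · simp
      · simp at h; omega
  have A1 : ∀ n, ind P n ≤ w n := fun n => by
    rw [hw1, ind_eq]; exact (bonf _ b).1
  have A2 : ∀ n, w n ≤ ind P n + e n := fun n => by
    rw [hw1, ind_eq, he1]; exact (bonf _ b).2
  have A3 : ∀ n, 0 ≤ e n := fun n => by rw [he1]; positivity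
  have hleg := DS.leg P hP z hz hPz
  set V := ∏ p ∈ P, (1 - 1 / (p : ℝ)) with hV
  have B1 : vw ≤ V + ve :=
    hw'.le ((hleg.mono (Finset.Subset.refl _) (le_max_left _ (z ^ (2 * b + 1))) le_rfl).add
      (he'.mono (Finset.Subset.refl _) (le_max_right (z ^ P.card) _) le_rfl)) hP hP A2
  have B2 : ve ≤ Real.exp (2 * L) * (1 / 2) ^ (2 * b + 1) := by
    have h1 : ve * 2 ^ (2 * b + 1) ≤ ∏ p ∈ P, (1 + 2 * (1 / (p : ℝ))) := by
      rw [Finset.prod_one_add, hve, Finset.sum_mul]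
      rw [Finset.sum_filter]
      refine Finset.sum_le_sum fun S hS => ?_
      split_ifs with h
      · rw [Finset.prod_mul_distrib, Finset.prod_const, h]
        apply le_of_eq; ring
      · exact Finset.prod_nonneg fun p _ => by positivity
    have h2 : ∏ p ∈ P, (1 + 2 * (1 / (p : ℝ))) ≤ Real.exp (2 * L) := by
      calc ∏ p ∈ P, (1 + 2 * (1 / (p : ℝ))) ≤ ∏ p ∈ P, Real.exp (2 * (1 / (p : ℝ))) := by
            refine Finset.prod_le_prod (fun p _ => by positivity) fun p _ => ?_
            have := Real.add_one_le_exp (2 * (1 / (p : ℝ))); linarith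
        _ = Real.exp (2 * ∑ p ∈ P, 1 / (p : ℝ)) := by rw [← Real.exp_sum, Finset.mul_sum]
        _ ≤ Real.exp (2 * L) := Real.exp_le_exp.2 (by linarith)
    have h3 : ve ≤ Real.exp (2 * L) / 2 ^ (2 * b + 1) := by
      rw [le_div_iff₀ (by positivity)]; linarith
    calc ve ≤ _ := h3
      _ = _ := by rw [one_div, inv_pow]; rfl
  have B3 : Real.exp (-(2 * L)) ≤ V := by
    calc Real.exp (-(2 * L)) ≤ Real.exp (∑ p ∈ P, -(2 * (1 / (p : ℝ)))) := by
          apply Real.exp_le_exp.2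
          rw [Finset.sum_neg_distrib, ← Finset.mul_sum]; linarith
      _ = ∏ p ∈ P, Real.exp (-(2 * (1 / (p : ℝ)))) := Real.exp_sum _ _
      _ ≤ V := by
          refine Finset.prod_le_prod (fun p _ => (Real.exp_pos _).le) fun p hp => ?_
          have h2 : (2 : ℝ) ≤ p := by exact_mod_cast (hP p hp).two_le
          refine one_sub_ge_exp _ (by positivity) ?_
          exact one_div_le_one_div_of_le (by norm_num) h2
  have B4 : ve ≤ V * (Real.exp (4 * L) * (1 / 4) ^ b) := by
    refine B2.trans ?_
    have e1 : Real.exp (4 * L) = Real.exp (2 * L) * Real.exp (2 * L) := by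
      rw [← Real.exp_add]; ring_nf
    have e2 : Real.exp (-(2 * L)) * Real.exp (2 * L) = 1 := by rw [← Real.exp_add]; simp
    have e3 : ((1 : ℝ) / 2) ^ (2 * b + 1) = (1 / 4) ^ b / 2 := by
      rw [pow_succ, pow_mul]; norm_num; ring
    have e4 : 1 ≤ V * Real.exp (2 * L) := by
      rw [← e2]; gcongr
    have e5 : 0 ≤ Real.exp (2 * L) * (1 / 4) ^ b := by positivity
    rw [e3, e1]
    nlinarith [mul_le_mul_of_nonneg_right e4 e5]
  exact ⟨w, e, vw, ve, hw', he', A1, A2, A3, by linarith, B4⟩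

lemma mertens_dyadic (y : ℝ) (hy : 2 ≤ y) (k : ℕ) : ∀ P : Finset ℕ,
    (∀ p ∈ P, p.Prime ∧ y ≤ p ∧ (p:ℝ) < y * 2 ^ k) →
    ∑ p ∈ P, 1 / (p:ℝ) ≤ k * (2 * Real.log 4 / Real.log y) := by
  have hly : 0 < Real.log y := Real.log_pos (by linarith)
  induction k with
  | zero =>
    intro P hP
    have : P = ∅ := by
      apply Finset.eq_empty_of_forall_notMem
      intro p hp
      have := hP p hp
      simp at this
      linarith
    simp [this]
  | succ k ih =>
    intro P hP
    rw [← Finset.sum_filter_add_sum_filter_not P (fun p : ℕ => (p:ℝ) < y * 2 ^ k)]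
    have h1 := ih (P.filter (fun p : ℕ => (p:ℝ) < y * 2 ^ k)) (by
      intro p hp
      rw [Finset.mem_filter] at hp
      exact ⟨(hP p hp.1).1, (hP p hp.1).2.1, hp.2⟩)
    set x := y * 2 ^ k with hx
    have h2k : (1:ℝ) ≤ 2 ^ k := one_le_pow₀ (by norm_num)
    have hxy : y ≤ x := by rw [hx]; nlinarith
    have hx0 : 0 < x := by linarith
    have h2 : ∑ p ∈ P.filter (fun p : ℕ => ¬ (p:ℝ) < x), 1 / (p:ℝ) ≤ 2 * Real.log 4 / Real.log y := by
      have ha : ∀ p ∈ P.filter (fun p : ℕ => ¬ (p:ℝ) < x), 1 / (p:ℝ) ≤ Real.log p * (1 / (x * Real.log y)) := by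
        intro p hp
        rw [Finset.mem_filter, not_lt] at hp
        have hyp := (hP p hp.1).2.1
        have : Real.log y ≤ Real.log p := Real.log_le_log (by linarith) hyp
        rw [mul_one_div, div_le_div_iff₀ (by linarith) (by positivity)]
        nlinarith [mul_le_mul this hp.2 hx0.le (by linarith)]
      refine (Finset.sum_le_sum ha).trans ?_
      rw [← Finset.sum_mul]
      have hb : ∑ p ∈ P.filter (fun p : ℕ => ¬ (p:ℝ) < x), Real.log p ≤ Chebyshev.theta (2 * x) := by
        rw [Chebyshev.theta]
        apply Finset.sum_le_sum_of_subset_of_nonneg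
        · intro p hp
          rw [Finset.mem_filter] at hp ⊢
          have := hP p hp.1
          refine ⟨Finset.mem_Ioc.2 ⟨this.1.pos, Nat.le_floor ?_⟩, this.1⟩
          have h3 := this.2.2
          rw [pow_succ] at h3
          rw [hx]; linarith
        · intro p hp _
          exact Real.log_natCast_nonneg p
      have hc := Chebyshev.theta_le_log4_mul_x (x := 2 * x) (by linarith)
      calc _ ≤ (Real.log 4 * (2 * x)) * (1 / (x * Real.log y)) := by
            apply mul_le_mul_of_nonneg_right (hb.trans hc) (by positivity)
        _ = _ := by field_simp
    push_cast
    linarith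

lemma mertens_block (z : ℝ) (hz : 1 ≤ z) (P : Finset ℕ)
    (hP : ∀ p ∈ P, p.Prime ∧ Real.sqrt z ≤ p ∧ (p:ℝ) < z) : ∑ p ∈ P, 1 / (p:ℝ) ≤ 8 := by
  set y := Real.sqrt z with hy
  have hyz : y * y = z := Real.mul_self_sqrt (by linarith)
  have hy0 : 0 ≤ y := Real.sqrt_nonneg z
  by_cases h : 2 ≤ y
  · have hl2 : 0 < Real.log 2 := Real.log_pos (by norm_num)
    have hly : Real.log 2 ≤ Real.log y := Real.log_le_log (by norm_num) h
    have hl4 : Real.log 4 = 2 * Real.log 2 := by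
      rw [show (4:ℝ) = 2 ^ 2 by norm_num, Real.log_pow]; norm_num
    set k := ⌈Real.log y / Real.log 2⌉₊ with hk
    have hk1 : Real.log y / Real.log 2 ≤ k := Nat.le_ceil _
    have hk2 : (k:ℝ) < Real.log y / Real.log 2 + 1 := Nat.ceil_lt_add_one (div_nonneg (by linarith) hl2.le)
    have hy2 : y ≤ 2 ^ k := by
      rw [← Real.log_le_log_iff (by linarith) (by positivity), Real.log_pow]
      rwa [div_le_iff₀ hl2] at hk1
    refine (mertens_dyadic y h k P ?_).trans ?_
    · intro p hp
      refine ⟨(hP p hp).1, (hP p hp).2.1, (hP p hp).2.2.trans_le ?_⟩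
      rw [← hyz]; exact mul_le_mul_of_nonneg_left hy2 hy0
    · rw [hl4, mul_div_assoc', div_le_iff₀ (by linarith)]
      rw [← sub_lt_iff_lt_add, lt_div_iff₀ hl2] at hk2
      nlinarith
  · have hz4 : z < 4 := by nlinarith
    have : P ⊆ {2, 3} := by
      intro p hp
      have h1 := hP p hp
      have h2 : p < 4 := by exact_mod_cast h1.2.2.trans hz4
      have := h1.1.two_le
      simp; omega
    refine (Finset.sum_le_sum_of_subset_of_nonneg this (fun p _ _ => by positivity)).trans ?_
    norm_num

lemma ind_nonneg (P : Finset ℕ) (n : ℕ) : 0 ≤ ind P n := by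
  unfold ind; split_ifs <;> norm_num

lemma ind_le_one (P : Finset ℕ) (n : ℕ) : ind P n ≤ 1 := by
  unfold ind; split_ifs <;> norm_num

lemma ind_union (P Q : Finset ℕ) (n : ℕ) : ind (P ∪ Q) n = ind P n * ind Q n := by
  unfold ind
  by_cases h1 : ∀ p ∈ P, ¬ p ∣ n
  · by_cases h2 : ∀ p ∈ Q, ¬ p ∣ n
    · rw [if_pos h1, if_pos h2, if_pos]
      · norm_num
      · intro p hp
        rcases Finset.mem_union.1 hp with h | h
        · exact h1 p h
        · exact h2 p h
    · rw [if_neg h2, if_neg]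
      · norm_num
      · intro h; exact h2 (fun p hp => h p (Finset.mem_union_right _ hp))
  · rw [if_neg h1, if_neg]
    · norm_num
    · intro h; exact h1 (fun p hp => h p (Finset.mem_union_left _ hp))

lemma card_primes_lt (z : ℝ) (hz : 1 ≤ z) (P : Finset ℕ) (hP : ∀ p ∈ P, p.Prime ∧ (p:ℝ) < z) :
    (P.card : ℝ) + 1 ≤ z := by
  have h : P ⊆ Finset.Ioo 1 ⌈z⌉₊ := by
    intro p hp
    have := hP p hp
    exact Finset.mem_Ioo.2 ⟨this.1.one_lt, Nat.lt_ceil.2 this.2⟩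
  have h1 := Finset.card_le_card h
  rw [Nat.card_Ioo] at h1
  rcases Nat.eq_zero_or_pos P.card with h0 | h0
  · rw [h0]; simpa using hz
  · have h2 : P.card + 2 ≤ ⌈z⌉₊ := by omega
    have h3 : (⌈z⌉₊ : ℝ) < z + 1 := Nat.ceil_lt_add_one (by linarith)
    have : ((P.card + 2 : ℕ) : ℝ) ≤ ⌈z⌉₊ := by exact_mod_cast h2
    push_cast at this
    linarith

/-- the sieve density -/
noncomputable def VV (P : Finset ℕ) : ℝ := ∏ p ∈ P, (1 - 1 / (p:ℝ))

lemma VV_nonneg (P : Finset ℕ) (hP : ∀ p ∈ P, p.Prime) : 0 ≤ VV P := by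
  apply Finset.prod_nonneg
  intro p hp
  have : (1:ℝ) ≤ p := by exact_mod_cast (hP p hp).one_le
  rw [sub_nonneg, div_le_one (by linarith)]; exact this

lemma sieve_step (J : ℕ) : ∀ (b : ℕ) (z : ℝ) (P : Finset ℕ), 1 ≤ z → z ≤ 2 ^ (2 ^ J) →
    (∀ p ∈ P, p.Prime ∧ (p:ℝ) < z) →
    ∃ (w E : ℕ → ℝ) (vw vE : ℝ), DS P (z ^ (4*b+6)) (z ^ (4*b+6)) w vw ∧
      DS P (z ^ (4*b+6)) (J * z ^ (4*b+6)) E vE ∧ (∀ n, ind P n ≤ w n) ∧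
      (∀ n, w n ≤ ind P n + E n) ∧ (∀ n, 0 ≤ E n) ∧
      vw ≤ VV P * Real.exp (4/3 * (Real.exp (4*8) * (1/4)^b)) ∧
      vE ≤ VV P * Real.exp (4/3 * (Real.exp (4*8) * (1/4)^b)) * (4/3 * (Real.exp (4*8) * (1/4)^b)) := by
  induction J with
  | zero =>
    intro b z P hz hz2 hP
    have hPe : P = ∅ := by
      apply Finset.eq_empty_of_forall_notMem
      intro p hp
      have h := hP p hp
      have h2 : (2:ℝ) ≤ p := by exact_mod_cast h.1.two_le
      norm_num at hz2
      linarith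
    subst hPe
    have hz1 : (1:ℝ) ≤ z ^ (4*b+6) := one_le_pow₀ hz
    refine ⟨fun _ => 1, fun _ => 0, 1, 0, ?_, ?_, ?_, ?_, ?_, ?_, ?_⟩
    · exact ⟨Unit, inferInstance, fun _ => 1, fun _ => 1, by simpa using hz1, by simpa using hz1,
        by simp, by simp⟩
    · exact ⟨Unit, inferInstance, fun _ => 0, fun _ => 1, by simpa using hz1, by simp,
        by simp, by simp⟩
    · intro n; exact ind_le_one _ _
    · intro n; simp [ind]
    · intro n; exact le_refl _
    · simp only [VV, Finset.prod_empty, one_mul]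
      apply Real.one_le_exp; positivity
    · simp only [VV, Finset.prod_empty, one_mul]; positivity
  | succ J ih =>
    intro b z P hz hz2 hP
    have hs0 : 0 ≤ Real.sqrt z := Real.sqrt_nonneg z
    have hs2 : Real.sqrt z ^ 2 = z := Real.sq_sqrt (by linarith)
    have hs1 : 1 ≤ Real.sqrt z := by rw [Real.one_le_sqrt]; exact hz
    set P1 := P.filter (fun p : ℕ => (p:ℝ) < Real.sqrt z) with hP1
    set P2 := P.filter (fun p : ℕ => ¬ (p:ℝ) < Real.sqrt z) with hP2
    have hPu : P1 ∪ P2 = P := Finset.filter_union_filter_not_eq _ P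
    have hdisj : Disjoint P1 P2 := Finset.disjoint_filter_filter_not _ _ _
    have hP1p : ∀ p ∈ P1, p.Prime ∧ (p:ℝ) < Real.sqrt z := fun p hp => by
      rw [hP1, Finset.mem_filter] at hp
      exact ⟨(hP p hp.1).1, hp.2⟩
    have hP2p : ∀ p ∈ P2, p.Prime ∧ Real.sqrt z ≤ p ∧ (p:ℝ) < z := fun p hp => by
      rw [hP2, Finset.mem_filter, not_lt] at hp
      exact ⟨(hP p hp.1).1, hp.2, (hP p hp.1).2⟩
    have hzJ : Real.sqrt z ≤ 2 ^ (2 ^ J) := by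
      rw [pow_succ, pow_mul] at hz2
      exact Real.sqrt_le_iff.2 ⟨by positivity, hz2⟩
    obtain ⟨w1, E1, v1, vE1, hw1, hE1, h1a, h1b, h1c, h1d, h1e⟩ := ih (b+1) (Real.sqrt z) P1 hs1 hzJ hP1p
    obtain ⟨w2, e2, v2, ve2, hw2, he2, h2a, h2b, h2c, h2d, h2e⟩ :=
      block P2 (fun p hp => (hP2p p hp).1) z hz (fun p hp => (hP2p p hp).2.2.le)
        (card_primes_lt z hz P2 (fun p hp => ⟨(hP2p p hp).1, (hP2p p hp).2.2⟩)) 8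
        (mertens_block z hz P2 hP2p) b
    have hpw : Real.sqrt z ^ (4*(b+1)+6) * z ^ (2*b+1) = z ^ (4*b+6) := by
      rw [show 4*(b+1)+6 = 2*(2*b+5) by ring, pow_mul, hs2, ← pow_add]
      congr 1; ring
    have hVV : VV P = VV P1 * VV P2 := by
      rw [← hPu]; exact Finset.prod_union hdisj
    have hV1 : 0 ≤ VV P1 := VV_nonneg _ (fun p hp => (hP1p p hp).1)
    have hV2 : 0 ≤ VV P2 := VV_nonneg _ (fun p hp => (hP2p p hp).1)
    change v2 ≤ VV P2 * _ at h2d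
    change ve2 ≤ VV P2 * _ at h2e
    set δ := Real.exp (4*8) * (1/4)^b with hδ
    have hδ0 : 0 ≤ δ := by positivity
    have hδ' : 4/3 * (Real.exp (4*8) * (1/4)^(b+1)) = δ / 3 := by
      rw [hδ, pow_succ]; ring
    rw [hδ'] at h1d h1e
    have hn1 : ∀ n, 0 ≤ w1 n := fun n => (ind_nonneg _ _).trans (h1a n)
    have hn2 : ∀ n, 0 ≤ w2 n := fun n => (ind_nonneg _ _).trans (h2a n)
    have hv1 : 0 ≤ v1 := hw1.nonneg (fun p hp => (hP1p p hp).1) hn1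
    have hv2 : 0 ≤ v2 := hw2.nonneg (fun p hp => (hP2p p hp).1) hn2
    have hve2 : 0 ≤ ve2 := he2.nonneg (fun p hp => (hP2p p hp).1) h2c
    have hexp : Real.exp (δ/3) * (1 + δ) ≤ Real.exp (4/3*δ) := by
      rw [show 4/3*δ = δ/3 + δ by ring, Real.exp_add]
      apply mul_le_mul_of_nonneg_left _ (Real.exp_pos _).le
      have := Real.add_one_le_exp δ
      linarith
    have hdw := hw1.mul hw2 hdisj
    have hdE1 := hE1.mul hw2 hdisj
    have hdE2 := hw1.mul he2 hdisj
    rw [hPu] at hdw hdE1 hdE2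
    rw [mul_assoc, hpw] at hdE1
    rw [hpw] at hdw hdE2
    have hdE := hdE1.add hdE2
    refine ⟨_, _, _, _, hdw, hdE.mono (le_refl _) (le_refl _) (by push_cast; linarith), ?_, ?_, ?_, ?_, ?_⟩
    · intro n
      rw [← hPu, ind_union]
      exact mul_le_mul (h1a n) (h2a n) (ind_nonneg _ _) (hn1 n)
    · intro n
      rw [← hPu, ind_union]
      nlinarith [mul_le_mul_of_nonneg_right (h1b n) (hn2 n), mul_le_mul_of_nonneg_left (h2b n) (ind_nonneg P1 n),
        mul_le_mul_of_nonneg_right (h1a n) (h2c n)]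
    · intro n
      have := mul_nonneg (h1c n) (hn2 n)
      have := mul_nonneg (hn1 n) (h2c n)
      linarith
    · calc v1 * v2 ≤ (VV P1 * Real.exp (δ/3)) * (VV P2 * (1 + δ)) :=
            mul_le_mul h1d h2d hv2 (by positivity)
        _ = VV P1 * VV P2 * (Real.exp (δ/3) * (1+δ)) := by ring
        _ ≤ VV P1 * VV P2 * Real.exp (4/3*δ) := mul_le_mul_of_nonneg_left hexp (by positivity)
        _ = _ := by rw [hVV]
    · have hA : vE1 * v2 ≤ (VV P1 * Real.exp (δ/3) * (δ/3)) * (VV P2 * (1 + δ)) :=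
            mul_le_mul h1e h2d hv2 (by positivity)
      have hB : v1 * ve2 ≤ (VV P1 * Real.exp (δ/3)) * (VV P2 * δ) :=
            mul_le_mul h1d h2e hve2 (by positivity)
      calc vE1 * v2 + v1 * ve2 ≤ VV P1 * VV P2 * (Real.exp (δ/3) * ((δ/3) * (1 + δ) + δ)) := by
            linarith
        _ ≤ VV P1 * VV P2 * (Real.exp (4/3*δ) * (4/3*δ)) := by
            apply mul_le_mul_of_nonneg_left _ (by positivity)
            have h5 : (δ/3) * (1 + δ) + δ ≤ (1+δ) * (4/3*δ) := by nlinarith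
            nlinarith [mul_le_mul_of_nonneg_left h5 (Real.exp_pos (δ/3)).le,
              mul_le_mul_of_nonneg_right hexp (show 0 ≤ 4/3*δ by positivity)]
        _ = _ := by rw [hVV]; ring

/-- Brun–Hooley type upper bound sieve with fundamental-lemma precision -/
lemma sieve : ∃ K : ℝ, 1 ≤ K ∧ ∀ (b : ℕ) (z : ℝ) (P : Finset ℕ), 2 ≤ z →
    (∀ p ∈ P, p.Prime ∧ (p:ℝ) < z) →
    ∃ (w E : ℕ → ℝ) (vw vE : ℝ), DS P (z ^ (4*b+8)) (z ^ (4*b+8)) w vw ∧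
      DS P (z ^ (4*b+8)) (z ^ (4*b+8)) E vE ∧ (∀ n, ind P n ≤ w n) ∧
      (∀ n, w n ≤ ind P n + E n) ∧ (∀ n, 0 ≤ E n) ∧
      vw ≤ K * VV P ∧ vE ≤ K * (1/4)^b * VV P := by
  set a := 4/3 * Real.exp (4*8) with ha
  have ha0 : 0 ≤ a := by positivity
  refine ⟨Real.exp a * (1 + a), ?_, ?_⟩
  · have := Real.one_le_exp ha0
    nlinarith
  intro b z P hz hP
  set J := ⌈z⌉₊ with hJ
  have hJ1 : z ≤ J := Nat.le_ceil z
  have hJ2 : (J:ℝ) < z + 1 := Nat.ceil_lt_add_one (by linarith)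
  have hJ3 : (J:ℝ) ≤ 2 ^ (2 ^ J) := by
    have h1 : J < 2 ^ J := Nat.lt_two_pow_self
    have h2 : 2 ^ J < 2 ^ (2 ^ J) := Nat.lt_two_pow_self
    exact_mod_cast (h1.trans h2).le
  obtain ⟨w, E, vw, vE, h1, h2, h3, h4, h5, h6, h7⟩ := sieve_step J b z P (by linarith) (hJ1.trans hJ3) hP
  have hp : z ^ (4*b+6) ≤ z ^ (4*b+8) := pow_le_pow_right₀ (by linarith) (by omega)
  have hb1 : (1/4:ℝ)^b ≤ 1 := pow_le_one₀ (by norm_num) (by norm_num)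
  have hb0 : 0 < (1/4:ℝ)^b := by positivity
  have hV := VV_nonneg P (fun p hp => (hP p hp).1)
  have hea : Real.exp (4/3 * (Real.exp (4*8) * (1/4)^b)) ≤ Real.exp a := by
    apply Real.exp_le_exp.2
    rw [ha]
    have := Real.exp_pos (4*8)
    nlinarith
  have hxa := Real.exp_pos a
  refine ⟨w, E, vw, vE, h1.mono le_rfl hp hp, h2.mono le_rfl hp ?_, h3, h4, h5, ?_, ?_⟩
  · rw [show z ^ (4*b+8) = z ^ (4*b+6) * z ^ 2 by ring, mul_comm]
    apply mul_le_mul_of_nonneg_left _ (by positivity)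
    nlinarith
  · refine h6.trans ?_
    rw [mul_comm]
    apply mul_le_mul_of_nonneg_right _ hV
    nlinarith
  · refine h7.trans ?_
    rw [mul_assoc, mul_comm]
    apply mul_le_mul_of_nonneg_right _ hV
    rw [show 4/3 * (Real.exp (4*8) * (1/4)^b) = a * (1/4)^b by rw [ha]; ring] at hea ⊢
    calc Real.exp (a * (1/4)^b) * (a * (1/4)^b) ≤ Real.exp a * (a * (1/4)^b) :=
          mul_le_mul_of_nonneg_right hea (by positivity)
      _ ≤ Real.exp a * ((1 + a) * (1/4)^b) := by
          apply mul_le_mul_of_nonneg_left _ hxa.le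
          nlinarith
      _ = _ := by ring

/-- primes below `z` -/
noncomputable def PB (z : ℝ) : Finset ℕ := (Finset.range ⌈z⌉₊).filter Nat.Prime
/-- primes below `z` not dividing `q` -/
noncomputable def PQ (z : ℝ) (q : ℕ) : Finset ℕ := (PB z).filter (fun p => ¬ p ∣ q)
/-- primes below `z` dividing `q` -/
noncomputable def PD (z : ℝ) (q : ℕ) : Finset ℕ := (PB z).filter (fun p => p ∣ q)

lemma mem_PB {z : ℝ} {p : ℕ} : p ∈ PB z ↔ p.Prime ∧ (p:ℝ) < z := by
  rw [PB, Finset.mem_filter, Finset.mem_range, Nat.lt_ceil, and_comm]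
lemma mem_PQ {z : ℝ} {q p : ℕ} : p ∈ PQ z q ↔ (p.Prime ∧ (p:ℝ) < z) ∧ ¬ p ∣ q := by
  rw [PQ, Finset.mem_filter, mem_PB]
lemma mem_PD {z : ℝ} {q p : ℕ} : p ∈ PD z q ↔ (p.Prime ∧ (p:ℝ) < z) ∧ p ∣ q := by
  rw [PD, Finset.mem_filter, mem_PB]
lemma PQ_union_PD (z : ℝ) (q : ℕ) : PQ z q ∪ PD z q = PB z := by
  rw [PQ, PD, Finset.union_comm]; exact Finset.filter_union_filter_not_eq _ _
lemma PQ_disj_PD (z : ℝ) (q : ℕ) : Disjoint (PQ z q) (PD z q) := by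
  rw [PQ, PD, disjoint_comm]; exact Finset.disjoint_filter_filter_not _ _ _

lemma VV_PB_le (z : ℝ) (hz : 2 ≤ z) : VV (PB z) * Real.log z ≤ 1 := by
  set N := ⌈z⌉₊ with hN
  have hNz : z ≤ N := Nat.le_ceil z
  have hN2 : 2 ≤ N := by exact_mod_cast hz.trans hNz
  let f : ℕ →* ℝ :=
    { toFun := fun n => (n:ℝ)⁻¹, map_one' := by simp, map_mul' := by intro a b; push_cast; rw [mul_inv] }
  have hf : ∀ {p : ℕ}, p.Prime → ‖f p‖ < 1 := by
    intro p hp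
    have : (1:ℝ) < p := by exact_mod_cast hp.one_lt
    change ‖(p:ℝ)⁻¹‖ < 1
    rw [norm_inv, Real.norm_natCast]
    exact inv_lt_one_of_one_lt₀ this
  have h := EulerProduct.summable_and_hasSum_smoothNumbers_prod_primesBelow_geometric hf N
  have hprod : ∏ p ∈ N.primesBelow, (1 - f p)⁻¹ = (VV (PB z))⁻¹ := by
    rw [VV, ← Finset.prod_inv_distrib]
    apply Finset.prod_congr rfl
    intro p _
    rw [one_div]; rfl
  have hharm : Real.log z ≤ (VV (PB z))⁻¹ := by
    rw [← hprod]
    have h1 : ∑ i : Fin (N-1), (((i:ℕ)+1:ℕ):ℝ)⁻¹ ≤ ∏ p ∈ N.primesBelow, (1 - f p)⁻¹ := by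
      let g : Fin (N-1) → N.smoothNumbers := fun i =>
        ⟨i+1, Nat.mem_smoothNumbers_of_lt (Nat.succ_pos _) (by omega)⟩
      have hg : Function.Injective g := by
        intro i j hij
        have := congrArg Subtype.val hij
        simp [g] at this
        exact Fin.ext this
      have h2 := sum_le_hasSum (Finset.univ.map ⟨g, hg⟩) (fun i _ => by
        change 0 ≤ ((i:ℕ):ℝ)⁻¹; positivity) h.2
      rw [Finset.sum_map] at h2
      exact h2
    refine le_trans ?_ h1
    have h3 := log_add_one_le_harmonic (N-1)
    rw [harmonic] at h3
    push_cast at h3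
    rw [Finset.sum_range] at h3
    push_cast
    refine le_trans ?_ h3
    apply Real.log_le_log (by linarith)
    rw [Nat.cast_sub (by omega)]
    push_cast; linarith
  have hV := VV_nonneg (PB z) (fun p hp => (mem_PB.1 hp).1)
  rcases hV.eq_or_lt with h0 | h0
  · rw [← h0]; simp
  · calc VV (PB z) * Real.log z ≤ VV (PB z) * (VV (PB z))⁻¹ := mul_le_mul_of_nonneg_left hharm hV
      _ = 1 := mul_inv_cancel₀ h0.ne'

/-- `q/φ(q)` -/
noncomputable def gq (q : ℕ) : ℝ := (q:ℝ) / Nat.totient q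

lemma VV_primeFactors (q : ℕ) (hq : 0 < q) : VV q.primeFactors * gq q = 1 := by
  have h : (Nat.totient q : ℚ) = q * ∏ p ∈ q.primeFactors, (1 - (p:ℚ)⁻¹) := Nat.totient_eq_mul_prod_factors q
  have h' : (Nat.totient q : ℝ) = q * ∏ p ∈ q.primeFactors, (1 - (p:ℝ)⁻¹) := by
    have := congrArg (fun x : ℚ => (x:ℝ)) h
    push_cast at this
    exact this
  have hV : VV q.primeFactors = ∏ p ∈ q.primeFactors, (1 - (p:ℝ)⁻¹) := by
    simp [VV, one_div]
  rw [← hV] at h'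
  have ht : (0:ℝ) < Nat.totient q := by exact_mod_cast Nat.totient_pos.2 hq
  rw [gq, mul_div_assoc', mul_comm, ← h', div_self ht.ne']

lemma gq_pos (q : ℕ) (hq : 0 < q) : 0 < gq q := by
  have ht : (0:ℝ) < Nat.totient q := by exact_mod_cast Nat.totient_pos.2 hq
  unfold gq; positivity

lemma VV_PQ_le (z : ℝ) (hz : 2 ≤ z) (q : ℕ) (hq : 0 < q) : VV (PQ z q) ≤ gq q / Real.log z := by
  have h1 := VV_PB_le z hz
  have h2 : VV (PB z) = VV (PQ z q) * VV (PD z q) := by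
    rw [← PQ_union_PD z q]; exact Finset.prod_union (PQ_disj_PD z q)
  have hpr : ∀ p ∈ q.primeFactors, p.Prime := fun p hp => Nat.prime_of_mem_primeFactors hp
  have h3 : VV q.primeFactors ≤ VV (PD z q) := by
    have hsub : PD z q ⊆ q.primeFactors := by
      intro p hp
      rw [mem_PD] at hp
      exact Nat.mem_primeFactors.2 ⟨hp.1.1, hp.2, hq.ne'⟩
    have hnn : ∀ p ∈ q.primeFactors, 0 ≤ 1 - 1 / (p:ℝ) := by
      intro p hp
      have : (1:ℝ) ≤ p := by exact_mod_cast (hpr p hp).one_le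
      rw [sub_nonneg, div_le_one (by linarith)]; exact this
    rw [VV, ← Finset.prod_sdiff hsub]
    apply mul_le_of_le_one_left (VV_nonneg _ (fun p hp => (mem_PD.1 hp).1.1))
    apply Finset.prod_le_one
    · intro p hp
      exact hnn p (Finset.mem_sdiff.1 hp).1
    · intro p hp
      simp
  have h4 := VV_primeFactors q hq
  have hg := gq_pos q hq
  have hl : 0 < Real.log z := Real.log_pos (by linarith)
  have h5 := VV_nonneg (PQ z q) (fun p hp => (mem_PQ.1 hp).1.1)
  rw [le_div_iff₀ hl]
  calc VV (PQ z q) * Real.log z = VV (PQ z q) * (VV q.primeFactors * gq q) * Real.log z := by rw [h4, mul_one]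
    _ ≤ VV (PQ z q) * (VV (PD z q) * gq q) * Real.log z := by gcongr
    _ = (VV (PB z) * Real.log z) * gq q := by rw [h2]; ring
    _ ≤ 1 * gq q := by gcongr
    _ = gq q := one_mul _

lemma prod_ge_card (S : Finset ℕ) : (∀ p ∈ S, 2 ≤ p) → 1 / ((S.card:ℝ) + 1) ≤ VV S := by
  induction S using Finset.induction_on_max with
  | empty => intro _; simp [VV]
  | insert a s hmax ih =>
    intro h
    have hns : a ∉ s := fun h => (hmax a h).false
    have h1 := ih (fun p hp => h p (Finset.mem_insert_of_mem hp))
    rw [VV, Finset.prod_insert hns, Finset.card_insert_of_notMem hns]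
    have h2 : s.card + 2 ≤ a := by
      have : s ⊆ Finset.Ico 2 a := fun p hp =>
        Finset.mem_Ico.2 ⟨h p (Finset.mem_insert_of_mem hp), hmax p hp⟩
      have h3 := Finset.card_le_card this
      rw [Nat.card_Ico] at h3
      have := h a (Finset.mem_insert_self _ _)
      omega
    have h2' : (s.card:ℝ) + 2 ≤ a := by exact_mod_cast h2
    have hs : (0:ℝ) ≤ s.card := by positivity
    change _ ≤ _ * VV s
    push_cast
    calc 1 / ((s.card:ℝ) + 1 + 1) = (1 - 1/((s.card:ℝ)+2)) * (1 / ((s.card:ℝ)+1)) := by field_simp; ring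
      _ ≤ (1 - 1/(a:ℝ)) * VV s := by
        apply mul_le_mul _ h1 (by positivity)
        · rw [sub_nonneg, div_le_one (by linarith)]; linarith
        · gcongr

lemma gq_le (q : ℕ) (hq : 0 < q) : gq q ≤ 1 + 2 * Real.log q := by
  have h1 := prod_ge_card q.primeFactors (fun p hp => (Nat.prime_of_mem_primeFactors hp).two_le)
  have h2 := VV_primeFactors q hq
  have hg := gq_pos q hq
  have hc : (0:ℝ) ≤ q.primeFactors.card := by positivity
  have h3 : gq q ≤ q.primeFactors.card + 1 := by
    rw [div_le_iff₀ (by positivity)] at h1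
    nlinarith
  have h4 : 2 ^ q.primeFactors.card ≤ q := by
    calc 2 ^ q.primeFactors.card ≤ ∏ p ∈ q.primeFactors, p := by
          apply Finset.pow_card_le_prod
          intro p hp; exact (Nat.prime_of_mem_primeFactors hp).two_le
      _ ≤ q := Nat.le_of_dvd hq (Nat.prod_primeFactors_dvd q)
  have h5 : (q.primeFactors.card : ℝ) * Real.log 2 ≤ Real.log q := by
    rw [← Real.log_pow]
    apply Real.log_le_log (by positivity)
    exact_mod_cast h4
  have := Real.log_two_gt_d9
  nlinarith

/-- additive character -/
noncomputable def ee (x : ℝ) : ℂ := Complex.exp ((2 * Real.pi * x : ℝ) * Complex.I)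

lemma ee_norm (x : ℝ) : ‖ee x‖ = 1 := Complex.norm_exp_ofReal_mul_I _

lemma ee_add (x y : ℝ) : ee (x + y) = ee x * ee y := by
  unfold ee; rw [← Complex.exp_add]; congr 1; push_cast; ring

lemma ee_int (m : ℤ) : ee m = 1 := by
  unfold ee
  rw [Complex.exp_eq_one_iff]
  exact ⟨m, by push_cast; ring⟩

lemma ee_zero : ee 0 = 1 := by simpa using ee_int 0

lemma ee_nat_mul (l : ℕ) (t : ℝ) : ee (l * t) = ee t ^ l := by
  unfold ee; rw [← Complex.exp_nat_mul]; congr 1; push_cast; ring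

lemma ee_conj (x : ℝ) : (starRingEnd ℂ) (ee x) = ee (-x) := by
  unfold ee; rw [← Complex.exp_conj]; congr 1
  rw [map_mul, Complex.conj_ofReal, Complex.conj_I]; push_cast; ring

lemma ee_sub_one (t δ : ℝ) (h : ∀ m : ℤ, δ ≤ |t - m|) : 4 * δ ≤ ‖ee t - 1‖ := by
  set s := t - round t with hs
  have h1 : ee t = ee s := by
    have : t = s + (round t : ℤ) := by rw [hs]; ring
    rw [this, ee_add, ee_int, mul_one]
  have hs2 : |s| ≤ 1 / 2 := abs_sub_round t
  have h2 : ‖ee s - 1‖ = ‖2 * Real.sin (2 * Real.pi * s / 2)‖ := by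
    rw [← Complex.norm_exp_I_mul_ofReal_sub_one, mul_comm]; rfl
  rw [h1, h2, norm_mul, Real.norm_eq_abs, Real.norm_eq_abs]
  have hpi := Real.pi_pos
  have h3 : |2 * Real.pi * s / 2| = Real.pi * |s| := by
    rw [show 2 * Real.pi * s / 2 = Real.pi * s by ring, abs_mul, abs_of_pos hpi]
  have h4 := Real.mul_abs_le_abs_sin (x := 2 * Real.pi * s / 2) (by rw [h3]; nlinarith)
  rw [h3] at h4
  have h5 : 2 / Real.pi * (Real.pi * |s|) = 2 * |s| := by field_simp
  rw [h5] at h4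
  have h6 := h (round t)
  rw [abs_of_pos (by norm_num : (0:ℝ) < 2)]
  linarith

lemma geom_bound (t δ : ℝ) (hδ : 0 < δ) (h : ∀ m : ℤ, δ ≤ |t - m|) (k : ℕ) :
    ‖∑ l ∈ Finset.Ioc 0 k, ee (l * t)‖ ≤ 1 / (2 * δ) := by
  have h1 := ee_sub_one t δ h
  have h2 : (∑ l ∈ Finset.Ioc 0 k, ee (l * t)) * (ee t - 1) = ee t * (ee t ^ k - 1) := by
    rw [← geom_sum_mul, ← mul_assoc, Finset.mul_sum]
    congr 1
    rw [← Finset.Ico_add_one_add_one_eq_Ioc, Finset.sum_Ico_eq_sum_range]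
    apply Finset.sum_congr (by simp)
    intro i _
    rw [ee_nat_mul, pow_add]; simp
  have h3 : ‖∑ l ∈ Finset.Ioc 0 k, ee (l * t)‖ * ‖ee t - 1‖ ≤ 2 := by
    rw [← norm_mul, h2, norm_mul, ee_norm, one_mul]
    refine (norm_sub_le _ _).trans ?_
    rw [norm_pow, ee_norm]; norm_num
  rw [le_div_iff₀ (by positivity)]
  have h4 := norm_nonneg (∑ l ∈ Finset.Ioc 0 k, ee (l * t))
  nlinarith

/-- `q` is a Dirichlet denominator for `α` at level `Q` -/
def Apx (α Q : ℝ) (q : ℕ) : Prop :=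
  0 < q ∧ ∃ a : ℤ, IsCoprime a (q:ℤ) ∧ |α - a / q| ≤ 1 / (q * Q)

lemma Apx_exists (α Q : ℝ) (hQ : 1 ≤ Q) : ∃ q : ℕ, (q:ℝ) ≤ Q ∧ Apx α Q q := by
  have hn : 0 < ⌊Q⌋₊ := Nat.floor_pos.2 hQ
  obtain ⟨r, h1, h2⟩ := Real.exists_rat_abs_sub_le_and_den_le α hn
  have hd : (0:ℝ) < r.den := by exact_mod_cast r.den_pos
  refine ⟨r.den, ?_, r.den_pos, r.num, ?_, ?_⟩
  · exact (Nat.cast_le.2 h2).trans (Nat.floor_le (by linarith))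
  · rw [Int.isCoprime_iff_gcd_eq_one]; exact r.reduced
  · rw [← Rat.cast_def]
    refine h1.trans ?_
    rw [mul_comm]
    have := (Nat.lt_floor_add_one Q).le
    gcongr

lemma Apx.dist {α Q : ℝ} {q : ℕ} (h : Apx α Q q) (hQ : 0 < Q) (k : ℤ) (hk : ¬ (q:ℤ) ∣ k) (hkQ : |(k:ℝ)| ≤ Q / 2)
    (m : ℤ) : 1 / (2 * (q:ℝ)) ≤ |k * α - m| := by
  obtain ⟨hq, a, hc, ha⟩ := h
  have hq' : (0:ℝ) < q := by exact_mod_cast hq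
  have h1 : k * a - m * q ≠ 0 := by
    intro h
    apply hk
    have : (q:ℤ) ∣ k * a := ⟨m, by linarith⟩
    exact hc.symm.dvd_of_dvd_mul_right this
  have h2 : (1:ℝ) ≤ |(k:ℝ) * a - m * q| := by
    have := Int.one_le_abs h1
    exact_mod_cast this
  have h3 : 1 / (q:ℝ) ≤ |k * ((a:ℝ) / q) - m| := by
    have : k * ((a:ℝ) / q) - m = ((k:ℝ) * a - m * q) / q := by field_simp
    rw [this, abs_div, abs_of_pos hq']
    gcongr
  have h4 : |k * (α - a/q)| ≤ 1 / (2 * q) := by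
    rw [abs_mul]
    calc |(k:ℝ)| * |α - a/q| ≤ (Q/2) * (1 / (q * Q)) := by gcongr
      _ = _ := by field_simp
  have h5 : k * ((a:ℝ) / q) - m = (k * α - m) - k * (α - a/q) := by ring
  have h6 := abs_sub (k * α - m) (k * (α - a/q))
  rw [← h5] at h6
  have h7 : 1 / (q:ℝ) = 1 / (2*q) + 1 / (2*q) := by field_simp; norm_num
  linarith

lemma irr_dist (α : ℝ) (hα : Irrational α) (T : ℕ) :
    ∃ δ > 0, ∀ q : ℕ, 0 < q → q ≤ T → ∀ a : ℤ, δ ≤ |q * α - a| := by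
  induction T with
  | zero => exact ⟨1, one_pos, fun q h1 h2 => by omega⟩
  | succ T ih =>
    obtain ⟨δ, hδ, h⟩ := ih
    have hirr : Irrational (((T+1:ℕ):ℝ) * α) := hα.natCast_mul (Nat.succ_ne_zero T)
    have hpos : 0 < |((T+1:ℕ):ℝ) * α - round (((T+1:ℕ):ℝ) * α)| := by
      rw [abs_pos, sub_ne_zero]
      exact hirr.ne_int _
    refine ⟨min δ |((T+1:ℕ):ℝ) * α - round (((T+1:ℕ):ℝ) * α)|, lt_min hδ hpos, ?_⟩
    intro q h1 h2 a
    rcases Nat.lt_or_ge q (T+1) with h3 | h3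
    · exact (min_le_left _ _).trans (h q h1 (by omega) a)
    · obtain rfl : q = T + 1 := by omega
      exact (min_le_right _ _).trans (round_le _ _)

lemma Apx_large (α : ℝ) (hα : Irrational α) (T : ℕ) :
    ∃ Q₀ : ℝ, 0 < Q₀ ∧ ∀ Q, Q₀ ≤ Q → ∀ q, Apx α Q q → T < q := by
  obtain ⟨δ, hδ, h⟩ := irr_dist α hα T
  refine ⟨2 / δ, by positivity, ?_⟩
  intro Q hQ q ⟨hq, a, _, ha⟩
  by_contra hle
  have hQ0 : 0 < Q := lt_of_lt_of_le (by positivity) hQ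
  have h1 := h q hq (by omega) a
  have hq' : (0:ℝ) < q := by exact_mod_cast hq
  have h2 : |q * α - a| = q * |α - a/q| := by
    rw [← abs_of_pos hq', ← abs_mul, abs_of_pos hq']; congr 1; field_simp
  have h3 : q * |α - a/q| ≤ 1 / Q := by
    calc q * |α - a/q| ≤ q * (1 / (q * Q)) := by gcongr
      _ = 1 / Q := by field_simp
  have h4 : δ ≤ 1 / Q := by rw [← h2] at h3; exact h1.trans h3
  rw [div_le_iff₀ hδ] at hQ
  rw [le_div_iff₀ hQ0] at h4
  linarith

lemma sum_dvd {M : Type*} [AddCommMonoid M] (X s : ℕ) (hs : 0 < s) (g : ℕ → M) :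
    ∑ n ∈ (Finset.Ioc 0 X).filter (fun n => s ∣ n), g n = ∑ m ∈ Finset.Ioc 0 (X / s), g (s * m) := by
  symm
  apply Finset.sum_bij (fun m _ => s * m)
  · intro m hm
    rw [Finset.mem_Ioc] at hm
    rw [Finset.mem_filter, Finset.mem_Ioc]
    refine ⟨⟨Nat.mul_pos hs hm.1, ?_⟩, dvd_mul_right _ _⟩
    rw [mul_comm]; exact (Nat.le_div_iff_mul_le hs).1 hm.2
  · intro a _ b _ h
    exact Nat.eq_of_mul_eq_mul_left hs h
  · intro n hn
    rw [Finset.mem_filter, Finset.mem_Ioc] at hn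
    obtain ⟨⟨h1, h2⟩, m, rfl⟩ := hn
    refine ⟨m, Finset.mem_Ioc.2 ⟨Nat.pos_of_mul_pos_left h1, ?_⟩, rfl⟩
    rw [Nat.le_div_iff_mul_le hs, mul_comm]; exact h2
  · intros; rfl

lemma DS.exp {P : Finset ℕ} {D B : ℝ} {f : ℕ → ℝ} {v : ℝ} (h : DS P D B f v) (X : ℕ) (t G : ℝ) (hG : 0 ≤ G)
    (hd : ∀ d : ℕ, 0 < d → (d:ℝ) ≤ D → d.primeFactors ⊆ P → ∀ Y : ℕ,
      ‖∑ l ∈ Finset.Ioc 0 Y, ee (l * (d * t))‖ ≤ G) :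
    ‖∑ n ∈ Finset.Ioc 0 X, (f n : ℂ) * ee (n * t)‖ ≤ B * G := by
  obtain ⟨ι, _, c, d, h1, h2, h3, h4⟩ := h
  have e1 : ∑ n ∈ Finset.Ioc 0 X, (f n : ℂ) * ee (n * t) =
      ∑ i, (c i : ℂ) * ∑ l ∈ Finset.Ioc 0 (X / d i), ee (l * (d i * t)) := by
    have : ∀ i, ∑ l ∈ Finset.Ioc 0 (X / d i), ee (l * (d i * t)) =
        ∑ n ∈ Finset.Ioc 0 X, if d i ∣ n then ee (n * t) else 0 := by
      intro i
      rw [← Finset.sum_filter, sum_dvd X (d i) (h1 i).1]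
      apply Finset.sum_congr rfl
      intro l _
      congr 1; push_cast; ring
    simp_rw [this, Finset.mul_sum]
    rw [Finset.sum_comm]
    apply Finset.sum_congr rfl
    intro n _
    rw [h3 n]
    push_cast
    rw [Finset.sum_mul]
    apply Finset.sum_congr rfl
    intro i _
    split_ifs <;> simp
  rw [e1]
  refine (norm_sum_le _ _).trans ?_
  calc ∑ i, ‖(c i : ℂ) * ∑ l ∈ Finset.Ioc 0 (X / d i), ee (l * (d i * t))‖ ≤ ∑ i, |c i| * G := by
        apply Finset.sum_le_sum
        intro i _
        rw [norm_mul, Complex.norm_real, Real.norm_eq_abs]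
        exact mul_le_mul_of_nonneg_left (hd _ (h1 i).1 (h1 i).2.1 (h1 i).2.2 _) (abs_nonneg _)
    _ = (∑ i, |c i|) * G := by rw [Finset.sum_mul]
    _ ≤ B * G := mul_le_mul_of_nonneg_right h2 hG

lemma DS.coprime_mul {P : Finset ℕ} {D B : ℝ} {f : ℕ → ℝ} {v : ℝ} (h : DS P D B f v) (s : ℕ) (hs : 0 < s)
    (hP : ∀ p ∈ P, ¬ p ∣ s) (m : ℕ) : f (s * m) = f m := by
  obtain ⟨ι, _, c, d, h1, h2, h3, h4⟩ := h
  rw [h3, h3]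
  apply Finset.sum_congr rfl
  intro i _
  have hc : Nat.Coprime (d i) s := by
    rw [← Nat.disjoint_primeFactors (h1 i).1.ne' hs.ne', Finset.disjoint_left]
    intro p hp hp'
    exact hP p ((h1 i).2.2 hp) (Nat.dvd_of_mem_primeFactors hp')
  simp only [hc.dvd_mul_left]

/-- exponential sums over sieve weights along `t = h α`. -/
lemma DS.exp_apx {P : Finset ℕ} {D B : ℝ} {f : ℕ → ℝ} {v : ℝ} (hf : DS P D B f v) (X : ℕ) {α Q : ℝ} {q : ℕ}
    (hA : Apx α Q q) (hQ : 0 < Q) (k : ℤ) (hd : ∀ d : ℕ, 0 < d → (d:ℝ) ≤ D → d.primeFactors ⊆ P → ¬ (q:ℤ) ∣ d * k)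
    (hk : D * |(k:ℝ)| ≤ Q / 2) :
    ‖∑ n ∈ Finset.Ioc 0 X, (f n : ℂ) * ee (n * (k * α))‖ ≤ B * q := by
  have hq' : (0:ℝ) < q := by exact_mod_cast hA.1
  apply hf.exp X (k * α) q hq'.le
  intro d h1 h2 h3 Y
  have h4 := hA.dist hQ (d * k) (hd d h1 h2 h3) (by
    push_cast
    rw [abs_mul, Nat.abs_cast]
    exact (mul_le_mul_of_nonneg_right h2 (abs_nonneg _)).trans hk)
  have h5 := geom_bound (d * (k * α)) (1 / (2 * q)) (by positivity) (by
    intro m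
    have := h4 m
    push_cast at this
    rwa [← mul_assoc]) Y
  refine h5.trans (le_of_eq ?_)
  field_simp

lemma ind_sum (P : Finset ℕ) (hP : ∀ p ∈ P, p.Prime) (n : ℕ) :
    ind P n = ∑ S ∈ P.powerset, (-1:ℝ) ^ S.card * (if (∏ p ∈ S, p) ∣ n then 1 else 0) := by
  have h := subset_sum_eq P n (fun i => (-1:ℝ) ^ i) (fun _ => True)
  simp only [Finset.filter_true, if_true] at h
  rw [ind_eq]
  have := Int.alternating_sum_range_choose (n := (P.filter (· ∣ n)).card)
  have h2 := congrArg (Int.cast : ℤ → ℝ) this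
  push_cast at h2
  rw [← h2]
  rw [Finset.sum_congr rfl (fun _ _ => mul_comm _ _), ← h]
  refine Finset.sum_congr rfl fun S hS => ?_
  have : (∏ p ∈ S, p ∣ n) ↔ ∀ p ∈ S, p ∣ n := by
    constructor
    · intro h p hp
      exact (Finset.dvd_prod_of_mem _ hp).trans h
    · intro h
      exact Finset.prod_primes_dvd n (fun p hp =>
        (hP p (Finset.mem_powerset.1 hS hp)).prime) h
  simp only [this]

lemma norm_err {w A E : ℕ → ℝ} (h1 : ∀ n, A n ≤ w n) (h2 : ∀ n, w n ≤ A n + E n) (X : ℕ) (t : ℝ) :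
    ‖∑ n ∈ Finset.Ioc 0 X, (A n : ℂ) * ee (n * t)‖ ≤ ‖∑ n ∈ Finset.Ioc 0 X, (w n : ℂ) * ee (n * t)‖
      + ∑ n ∈ Finset.Ioc 0 X, E n := by
  have e : ∑ n ∈ Finset.Ioc 0 X, (A n : ℂ) * ee (n * t) = ∑ n ∈ Finset.Ioc 0 X, (w n : ℂ) * ee (n * t)
      - ∑ n ∈ Finset.Ioc 0 X, ((w n - A n : ℝ) : ℂ) * ee (n * t) := by
    rw [← Finset.sum_sub_distrib]
    apply Finset.sum_congr rfl
    intro n _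
    push_cast; ring
  rw [e]
  refine (norm_sub_le _ _).trans ?_
  gcongr
  refine (norm_sum_le _ _).trans ?_
  apply Finset.sum_le_sum
  intro n _
  rw [norm_mul, ee_norm, mul_one, Complex.norm_real, Real.norm_eq_abs, abs_of_nonneg (by linarith [h1 n])]
  linarith [h2 n]

lemma PD_card (z : ℝ) (q : ℕ) (hq : 0 < q) : (2:ℝ) ^ (PD z q).card ≤ q := by
  have h4 : 2 ^ (PD z q).card ≤ q := by
    calc 2 ^ (PD z q).card ≤ ∏ p ∈ PD z q, p := by
          apply Finset.pow_card_le_prod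
          intro p hp; exact (mem_PD.1 hp).1.1.two_le
      _ ≤ q := Nat.le_of_dvd hq (Finset.prod_primes_dvd q (fun p hp => (mem_PD.1 hp).1.1.prime)
          (fun p hp => (mem_PD.1 hp).2))
  exact_mod_cast h4

lemma coprime_of_PQ {z : ℝ} {q d : ℕ} (hq : 0 < q) (hd : 0 < d) (h : d.primeFactors ⊆ PQ z q) : Nat.Coprime d q := by
  rw [← Nat.disjoint_primeFactors hd.ne' hq.ne', Finset.disjoint_left]
  intro p hp hp'
  exact (mem_PQ.1 (h hp)).2 (Nat.dvd_of_mem_primeFactors hp')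

lemma DS.sum_le {P : Finset ℕ} {D B : ℝ} {f : ℕ → ℝ} {v : ℝ} (h : DS P D B f v)
    (hP : ∀ p ∈ P, p.Prime) (X : ℕ) : ∑ n ∈ Finset.Ioc 0 X, f n ≤ X * v + B := by
  have := (abs_le.1 (h.all hP X)).2
  linarith

lemma rough_B_main {z D vw : ℝ} {w : ℕ → ℝ} {α Q : ℝ} {q : ℕ}
    (hA : Apx α Q q) (hQ : 0 < Q) (hqD : (q:ℝ) ≤ D) (hDQ : D ^ 2 ≤ Q / 2)
    (hw : DS (PQ z q) D D w vw) (hw0 : ∀ n, 0 ≤ w n) (X : ℕ) :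
    ‖∑ n ∈ Finset.Ioc 0 X, ((w n * ind (PD z q) n : ℝ) : ℂ) * ee (n * α)‖ ≤
      q * (D * q) + (X / q * vw + D) := by
  have hq := hA.1
  have hq' : (0:ℝ) < q := by exact_mod_cast hq
  have hD : 0 < D := by linarith
  have hpr : ∀ p ∈ PQ z q, p.Prime := fun p hp => (mem_PQ.1 hp).1.1
  have hprD : ∀ p ∈ PD z q, p.Prime := fun p hp => (mem_PD.1 hp).1.1
  have hv : 0 ≤ vw := hw.nonneg hpr hw0
  have e1 : ∑ n ∈ Finset.Ioc 0 X, ((w n * ind (PD z q) n : ℝ) : ℂ) * ee (n * α) =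
      ∑ S ∈ (PD z q).powerset, (-1:ℂ) ^ S.card *
        ∑ m ∈ Finset.Ioc 0 (X / ∏ p ∈ S, p), (w m : ℂ) * ee (m * (((∏ p ∈ S, p : ℕ) : ℤ) * α)) := by
    have : ∀ S ∈ (PD z q).powerset,
        ∑ m ∈ Finset.Ioc 0 (X / ∏ p ∈ S, p), (w m : ℂ) * ee (m * (((∏ p ∈ S, p : ℕ) : ℤ) * α)) =
        ∑ n ∈ Finset.Ioc 0 X, if (∏ p ∈ S, p) ∣ n then (w n : ℂ) * ee (n * α) else 0 := by
      intro S hS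
      rw [Finset.mem_powerset] at hS
      have hs : 0 < ∏ p ∈ S, p := Finset.prod_pos fun p hp => (hprD p (hS hp)).pos
      rw [← Finset.sum_filter, sum_dvd X _ hs]
      apply Finset.sum_congr rfl
      intro m _
      rw [hw.coprime_mul _ hs]
      · congr 2; push_cast; ring
      · intro p hp hps
        obtain ⟨p', hp', hpp⟩ := (Prime.dvd_finsetProd_iff (hpr p hp).prime _).1 hps
        have := (Nat.prime_dvd_prime_iff_eq (hpr p hp) (hprD p' (hS hp'))).1 hpp
        subst this
        exact (mem_PQ.1 hp).2 (mem_PD.1 (hS hp')).2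
    refine Eq.trans ?_ (Finset.sum_congr rfl (fun S hS => congrArg (fun x => (-1:ℂ) ^ S.card * x) (this S hS).symm))
    simp_rw [Finset.mul_sum]
    rw [Finset.sum_comm]
    apply Finset.sum_congr rfl
    intro n _
    rw [ind_sum _ hprD]
    push_cast
    rw [Finset.mul_sum, Finset.sum_mul]
    apply Finset.sum_congr rfl
    intro S _
    split_ifs
    · push_cast; ring
    · simp
  rw [e1]
  refine (norm_sum_le _ _).trans ?_
  have hS : ∀ S ∈ (PD z q).powerset, ‖(-1:ℂ) ^ S.card *
        ∑ m ∈ Finset.Ioc 0 (X / ∏ p ∈ S, p), (w m : ℂ) * ee (m * (((∏ p ∈ S, p : ℕ) : ℤ) * α))‖ ≤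
        D * q + (if S = q.primeFactors then X / q * vw + D else 0) := by
    intro S hS
    rw [Finset.mem_powerset] at hS
    have hs : 0 < ∏ p ∈ S, p := Finset.prod_pos fun p hp => (hprD p (hS hp)).pos
    have hsq : (∏ p ∈ S, p) ∣ q := Finset.prod_primes_dvd q (fun p hp => (hprD p (hS hp)).prime)
          (fun p hp => (mem_PD.1 (hS hp)).2)
    have hpf : (∏ p ∈ S, p).primeFactors = S := Nat.primeFactors_prod (fun p hp => hprD p (hS hp))
    rw [norm_mul, norm_pow, norm_neg, norm_one, one_pow, one_mul]
    set s := ∏ p ∈ S, p with hsdef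
    by_cases hsq2 : s = q
    · have : S = q.primeFactors := by rw [← hsq2, hpf]
      rw [if_pos this]
      have h1 : ‖∑ m ∈ Finset.Ioc 0 (X / s), (w m : ℂ) * ee (m * ((s : ℤ) * α))‖ ≤
          ∑ m ∈ Finset.Ioc 0 (X / s), w m := by
        refine (norm_sum_le _ _).trans (le_of_eq ?_)
        apply Finset.sum_congr rfl
        intro m _
        rw [norm_mul, ee_norm, mul_one, Complex.norm_real, Real.norm_eq_abs, abs_of_nonneg (hw0 m)]
      have h2 := hw.sum_le hpr (X / s)
      have h3 : ((X / s : ℕ) : ℝ) ≤ X / q := by rw [← hsq2]; exact Nat.cast_div_le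
      have h4 := mul_le_mul_of_nonneg_right h3 hv
      have : 0 ≤ D * q := by positivity
      linarith
    · have h0 : (0:ℝ) ≤ (if S = q.primeFactors then X / q * vw + D else 0) := by
        split_ifs <;> positivity
      have h1 := hw.exp_apx (X / s) hA hQ (s:ℤ) (by
        intro d hd _ hdp hdvd
        have hc := coprime_of_PQ hq hd hdp
        have : q ∣ d * s := by exact_mod_cast hdvd
        have := hc.symm.dvd_of_dvd_mul_left this
        exact hsq2 (Nat.dvd_antisymm hsq this)) (by
        have : (s:ℝ) ≤ q := by exact_mod_cast Nat.le_of_dvd hq hsq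
        rw [Int.cast_natCast, Nat.abs_cast]
        nlinarith)
      linarith
  refine (Finset.sum_le_sum hS).trans ?_
  rw [Finset.sum_add_distrib, Finset.sum_const, Finset.card_powerset, nsmul_eq_mul, Finset.sum_ite_eq']
  have hc := PD_card z q hq
  push_cast
  apply add_le_add
  · gcongr
  · split_ifs
    · exact le_rfl
    · positivity

lemma rough : ∃ K : ℝ, 1 ≤ K ∧ ∀ (b : ℕ) (z D N α : ℝ) (q : ℕ), 2 ≤ z → D = z ^ (4*b+8) → 2 * D ^ 4 ≤ N →
    Apx α (N / D ^ 2) q → (q:ℝ) ≤ N / D ^ 2 → ∀ X : ℕ, (X:ℝ) ≤ N →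
    ‖∑ n ∈ Finset.Ioc 0 X, (ind (PB z) n : ℂ) * ee (n * α)‖ ≤
      N / D + 3 * D ^ 3 + N * K * ((1/4)^b + gq q / q) / Real.log z := by
  obtain ⟨K, hK, hsieve⟩ := sieve
  refine ⟨K, hK, ?_⟩
  intro b z D N α q hz hDdef hN hA hqQ X hX
  have hD1 : 1 ≤ D := by rw [hDdef]; exact one_le_pow₀ (by linarith)
  have hD0 : 0 < D := by linarith
  have hD4 : 1 ≤ D ^ 4 := one_le_pow₀ hD1
  have hN0 : 0 < N := by linarith
  have hQ : 0 < N / D ^ 2 := by positivity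
  have hDQ : D ^ 2 ≤ N / D ^ 2 / 2 := by
    rw [div_div, le_div_iff₀ (by positivity)]; nlinarith
  have hlz : 0 < Real.log z := Real.log_pos (by linarith)
  have hq := hA.1
  have hq' : (0:ℝ) < q := by exact_mod_cast hq
  have hg := gq_pos q hq
  have hX0 : (0:ℝ) ≤ X := by positivity
  have hb0 : (0:ℝ) < (1/4)^b := by positivity
  have hVB : VV (PB z) ≤ 1 / Real.log z := by rw [le_div_iff₀ hlz]; exact VV_PB_le z hz
  have hVB0 := VV_nonneg (PB z) (fun p hp => (mem_PB.1 hp).1)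
  have hD23 : D ≤ D ^ 3 := le_self_pow₀ hD1 (by norm_num)
  by_cases hqD : (q:ℝ) ≤ D
  · obtain ⟨w, E, vw, vE, h1, h2, h3, h4, h5, h6, h7⟩ := hsieve b z (PQ z q) hz (fun p hp => (mem_PQ.1 hp).1)
    rw [← hDdef] at h1 h2
    have hpr : ∀ p ∈ PQ z q, p.Prime := fun p hp => (mem_PQ.1 hp).1.1
    have hprD : ∀ p ∈ PD z q, p.Prime := fun p hp => (mem_PD.1 hp).1.1
    have hprB : ∀ p ∈ PB z, p.Prime := fun p hp => (mem_PB.1 hp).1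
    have hw0 : ∀ n, 0 ≤ w n := fun n => (ind_nonneg _ _).trans (h3 n)
    have hmain := rough_B_main hA hQ hqD hDQ h1 hw0 X
    have herr := norm_err (w := fun n => w n * ind (PD z q) n) (A := ind (PB z)) (E := fun n => E n * ind (PD z q) n)
      (fun n => by
        rw [← PQ_union_PD z q, ind_union]
        exact mul_le_mul_of_nonneg_right (h3 n) (ind_nonneg _ _))
      (fun n => by
        rw [← PQ_union_PD z q, ind_union, ← add_mul]
        exact mul_le_mul_of_nonneg_right (h4 n) (ind_nonneg _ _)) X α
    have hleg := DS.leg (PD z q) hprD z (by linarith) (fun p hp => (mem_PD.1 hp).1.2.le)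
    have hEd := h2.mul hleg (PQ_disj_PD z q)
    rw [PQ_union_PD] at hEd
    have hEs := hEd.sum_le hprB X
    have hcard := PD_card z q hq
    have hV : VV (PB z) = VV (PQ z q) * VV (PD z q) := by
      rw [← PQ_union_PD z q]; exact Finset.prod_union (PQ_disj_PD z q)
    have hVD := VV_nonneg (PD z q) hprD
    change _ ≤ (X:ℝ) * (vE * VV (PD z q)) + _ at hEs
    have hE1 : vE * VV (PD z q) ≤ K * (1/4)^b * (1 / Real.log z) := by
      calc vE * VV (PD z q) ≤ (K * (1/4)^b * VV (PQ z q)) * VV (PD z q) := by gcongr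
        _ = K * (1/4)^b * VV (PB z) := by rw [hV]; ring
        _ ≤ _ := by gcongr
    have hvw : vw ≤ K * (gq q / Real.log z) := h6.trans (by gcongr; exact VV_PQ_le z hz q hq)
    have t1 : (X:ℝ) * (vE * VV (PD z q)) ≤ N * (K * (1/4)^b * (1 / Real.log z)) := by
      calc (X:ℝ) * (vE * VV (PD z q)) ≤ X * (K * (1/4)^b * (1 / Real.log z)) := by gcongr
        _ ≤ _ := by gcongr
    have t2 : (X:ℝ) / q * vw ≤ N / q * (K * (gq q / Real.log z)) := by
      calc (X:ℝ) / q * vw ≤ X / q * (K * (gq q / Real.log z)) := by gcongr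
        _ ≤ _ := by gcongr
    have t3 : D * 2 ^ (PD z q).card ≤ D * D := by gcongr; linarith
    have t4 : (q:ℝ) * (D * q) ≤ D * (D * D) := by gcongr
    have t5 : D * D ≤ D ^ 3 := by nlinarith
    have t6 : N * K * ((1/4)^b + gq q / q) / Real.log z = N * (K * (1/4)^b * (1 / Real.log z))
        + N / q * (K * (gq q / Real.log z)) := by field_simp
    have t7 : 0 ≤ N / D := by positivity
    rw [t6]
    nlinarith
  · push Not at hqD
    obtain ⟨w, E, vw, vE, h1, h2, h3, h4, h5, h6, h7⟩ := hsieve b z (PB z) hz (fun p hp => (mem_PB.1 hp))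
    rw [← hDdef] at h1 h2
    have hprB : ∀ p ∈ PB z, p.Prime := fun p hp => (mem_PB.1 hp).1
    have herr := norm_err h3 h4 X α
    have hEs := h2.sum_le hprB X
    have hmain := h1.exp_apx X hA hQ 1 (by
      intro d hd hdD _ hdvd
      rw [mul_one] at hdvd
      have h8 : q ∣ d := by exact_mod_cast hdvd
      have h9 : (q:ℝ) ≤ d := by exact_mod_cast Nat.le_of_dvd hd h8
      linarith) (by simp; nlinarith)
    simp only [Int.cast_one, one_mul] at hmain
    have t1 : (X:ℝ) * vE ≤ N * (K * (1/4)^b * (1 / Real.log z)) := by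
      calc (X:ℝ) * vE ≤ X * (K * (1/4)^b * (1 / Real.log z)) := by
            gcongr; exact h7.trans (by gcongr)
        _ ≤ _ := by gcongr
    have t2 : 0 ≤ N / q * (K * (gq q / Real.log z)) := by positivity
    have t3 : D * q ≤ N / D := by
      calc D * q ≤ D * (N / D ^ 2) := by gcongr
        _ = N / D := by field_simp
    have t6 : N * K * ((1/4)^b + gq q / q) / Real.log z = N * (K * (1/4)^b * (1 / Real.log z))
        + N / q * (K * (gq q / Real.log z)) := by field_simp
    rw [t6]
    have : 0 ≤ D ^ 3 := by positivity
    linarith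

lemma pow_log_le (c : ℝ) (hc : c < 1) (k : ℕ) (η : ℝ) (hη : 0 < η) :
    ∀ᶠ N : ℕ in atTop, (N:ℝ) ^ c * Real.log N ^ k ≤ η * N := by
  have h := isLittleO_log_rpow_rpow_atTop (k:ℝ) (show 0 < 1 - c by linarith)
  have h2 := (h.bound hη)
  have h3 := tendsto_natCast_atTop_atTop (R := ℝ) |>.eventually h2
  filter_upwards [h3, eventually_ge_atTop 1] with N hN hN1
  have hN0 : (0:ℝ) < N := by exact_mod_cast hN1
  rw [Real.rpow_natCast] at hN
  rw [Real.norm_of_nonneg (pow_nonneg (Real.log_natCast_nonneg N) k), Real.norm_of_nonneg (by positivity)] at hN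
  calc (N:ℝ) ^ c * Real.log N ^ k ≤ (N:ℝ) ^ c * (η * (N:ℝ) ^ (1 - c)) := by gcongr
    _ = η * ((N:ℝ) ^ c * (N:ℝ) ^ (1 - c)) := by ring
    _ = η * N := by rw [← Real.rpow_add hN0]; simp

lemma gq_ge_one (q : ℕ) (hq : 0 < q) : 1 ≤ gq q := by
  unfold gq
  have ht : (0:ℝ) < Nat.totient q := by exact_mod_cast Nat.totient_pos.2 hq
  rw [le_div_iff₀ ht, one_mul]
  exact_mod_cast Nat.totient_le q

lemma gq_small (η : ℝ) (hη : 0 < η) : ∃ T : ℕ, ∀ q : ℕ, T < q → gq q ^ 2 / Real.sqrt q ≤ η := by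
  have h1 := pow_log_le (1/2) (by norm_num) 2 (η/18) (by positivity)
  obtain ⟨T, hT⟩ := eventually_atTop.1 (h1.and (eventually_ge_atTop 3))
  refine ⟨T, fun q hq => ?_⟩
  obtain ⟨h2, h3⟩ := hT q hq.le
  have hq0 : 0 < q := by omega
  have hq' : (0:ℝ) < q := by exact_mod_cast hq0
  have h4 := gq_le q hq0
  have h5 := gq_ge_one q hq0
  have hl : 1 ≤ Real.log q := by
    rw [Real.le_log_iff_exp_le hq']
    have : (3:ℝ) ≤ q := by exact_mod_cast h3
    have := Real.exp_one_lt_d9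
    linarith
  rw [← Real.sqrt_eq_rpow] at h2
  have hs : Real.sqrt q * Real.sqrt q = q := Real.mul_self_sqrt hq'.le
  have hs0 : 0 < Real.sqrt q := Real.sqrt_pos.2 hq'
  have h6 : gq q ^ 2 ≤ (3 * Real.log q) ^ 2 := by gcongr; linarith
  have h7 : Real.log q ^ 2 ≤ η / 18 * Real.sqrt q := by
    have : Real.sqrt q * Real.log q ^ 2 ≤ Real.sqrt q * (η / 18 * Real.sqrt q) := by nlinarith
    exact le_of_mul_le_mul_left this hs0
  rw [div_le_iff₀ hs0]
  nlinarith

lemma gq_div_le (q : ℕ) (hq : 0 < q) : gq q / q ≤ gq q ^ 2 / Real.sqrt q := by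
  have h5 := gq_ge_one q hq
  have hq' : (1:ℝ) ≤ q := by exact_mod_cast hq
  have hs : Real.sqrt q ≤ q := by
    rw [Real.sqrt_le_left (by linarith)]; nlinarith
  have hs0 : 0 < Real.sqrt q := Real.sqrt_pos.2 (by linarith)
  apply div_le_div₀ (by positivity) (by nlinarith) hs0 hs

lemma rough_lim (α : ℝ) (hα : Irrational α) (η : ℝ) (hη : 0 < η) :
    ∃ ε : ℝ, 0 < ε ∧ ε ≤ 1/64 ∧ ∀ᶠ N : ℕ in atTop, ∀ X : ℕ, X ≤ N →
      ‖∑ n ∈ Finset.Ioc 0 X, (ind (PB ((N:ℝ) ^ ε)) n : ℂ) * ee (n * α)‖ ≤ η * N / Real.log N := by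
  obtain ⟨K, hK, hr⟩ := rough
  have hb : ∃ b : ℕ, K * (1/4)^b * (8 * (4*b+8)) ≤ η / 3 := by
    have h1 : Tendsto (fun b : ℕ => K * (32 * ((b:ℝ) * (1/4:ℝ)^b) + 64 * (1/4:ℝ)^b)) atTop (nhds (K * (32 * 0 + 64 * 0))) := by
      apply Tendsto.const_mul
      apply Tendsto.add
      · apply Tendsto.const_mul
        exact tendsto_self_mul_const_pow_of_lt_one (by norm_num) (by norm_num)
      · apply Tendsto.const_mul
        exact tendsto_pow_atTop_nhds_zero_of_lt_one (by norm_num) (by norm_num)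
    have h2 := h1.eventually_le_const (show K * (32 * 0 + 64 * 0) < η/3 by simp; positivity)
    obtain ⟨b, hb⟩ := h2.exists
    refine ⟨b, le_trans (le_of_eq ?_) hb⟩
    ring
  obtain ⟨b, hb⟩ := hb
  set ε : ℝ := 1 / (8 * (4*b+8)) with hε
  have hε0 : 0 < ε := by positivity
  have hb0 : (0:ℝ) ≤ b := by positivity
  obtain ⟨T, hT⟩ := gq_small (η / 3 * ε / K) (by positivity)
  obtain ⟨Q₀, hQ₀, hQ⟩ := Apx_large α hα T
  refine ⟨ε, hε0, ?_, ?_⟩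
  · rw [hε]; apply one_div_le_one_div_of_le (by norm_num); linarith
  have e1 := pow_log_le (7/8) (by norm_num) 1 (η/6) (by positivity)
  have e2 := pow_log_le (3/8) (by norm_num) 1 (η/18) (by positivity)
  have e3 : ∀ᶠ N : ℕ in atTop, 2 ≤ (N:ℝ) ^ ε :=
    ((tendsto_rpow_atTop hε0).comp tendsto_natCast_atTop_atTop).eventually_ge_atTop 2
  have e4 : ∀ᶠ N : ℕ in atTop, Q₀ ≤ (N:ℝ) ^ (3/4:ℝ) :=
    ((tendsto_rpow_atTop (by norm_num : (0:ℝ) < 3/4)).comp tendsto_natCast_atTop_atTop).eventually_ge_atTop _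
  filter_upwards [e1, e2, e3, e4, eventually_ge_atTop 4] with N h1 h2 h3 h4 h5 X hX
  have hN4 : (4:ℝ) ≤ N := by exact_mod_cast h5
  have hN0 : (0:ℝ) < N := by linarith
  have hl : 0 < Real.log N := Real.log_pos (by linarith)
  set D : ℝ := (N:ℝ) ^ (1/8:ℝ) with hD
  have hD0 : 0 < D := by positivity
  have hDz : D = ((N:ℝ) ^ ε) ^ (4*b+8) := by
    rw [← Real.rpow_natCast, ← Real.rpow_mul hN0.le, hD]
    congr 1
    rw [hε]; push_cast; field_simp
  have hDk : ∀ k : ℕ, D ^ k = (N:ℝ) ^ ((k:ℝ)/8) := by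
    intro k
    rw [← Real.rpow_natCast, hD, ← Real.rpow_mul hN0.le]; congr 1; ring
  have hD4 : 2 * D ^ 4 ≤ N := by
    rw [hDk 4, show ((4:ℕ):ℝ)/8 = 1/2 by norm_num, ← Real.sqrt_eq_rpow]
    have hs : Real.sqrt N * Real.sqrt N = N := Real.mul_self_sqrt hN0.le
    have : 2 ≤ Real.sqrt N := by
      rw [Real.le_sqrt' (by norm_num)]; linarith
    nlinarith
  have hQeq : (N:ℝ) / D ^ 2 = (N:ℝ) ^ (3/4:ℝ) := by
    rw [hDk 2]
    nth_rewrite 1 [← Real.rpow_one (N:ℝ)]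
    rw [← Real.rpow_sub hN0]; norm_num
  have hDN : (N:ℝ) / D = (N:ℝ) ^ (7/8:ℝ) := by
    rw [hD]
    nth_rewrite 1 [← Real.rpow_one (N:ℝ)]
    rw [← Real.rpow_sub hN0]; norm_num
  obtain ⟨q, hqQ, hA⟩ := Apx_exists α ((N:ℝ) / D ^ 2) (by
    rw [hQeq]; exact Real.one_le_rpow (by linarith) (by norm_num))
  have hTq := hQ _ (by rw [hQeq]; exact h4) q hA
  have hgq := (gq_div_le q hA.1).trans (hT q hTq)
  have hq' : (0:ℝ) < q := by exact_mod_cast hA.1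
  have := hr b _ D N α q h3 hDz hD4 hA hqQ X (by exact_mod_cast hX)
  refine this.trans ?_
  rw [hDN, hDk 3, Real.log_rpow hN0]
  rw [pow_one] at h1 h2
  have f1 : (N:ℝ) ^ (7/8:ℝ) ≤ η / 6 * N / Real.log N := by rwa [le_div_iff₀ hl]
  have f2 : (N:ℝ) ^ (((3:ℕ):ℝ)/8) ≤ η / 18 * N / Real.log N := by
    rw [le_div_iff₀ hl]; push_cast; exact h2
  have f3 : N * K * ((1/4)^b + gq q / q) / (ε * Real.log N) ≤ (2 * η / 3) * N / Real.log N := by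
    rw [div_le_div_iff₀ (by positivity) hl]
    have g1 : K * (1/4)^b ≤ η / 3 * ε := by
      rw [hε, mul_one_div, le_div_iff₀ (by positivity)]; exact hb
    have g2 : K * (gq q / q) ≤ η / 3 * ε := by
      rw [le_div_iff₀ (by positivity)] at hgq; linarith
    have g3 : K * ((1/4)^b + gq q / q) ≤ 2 * η / 3 * ε := by linarith
    calc N * K * ((1/4)^b + gq q / q) * Real.log N = (N * Real.log N) * (K * ((1/4)^b + gq q / q)) := by ring
      _ ≤ (N * Real.log N) * (2 * η / 3 * ε) := by gcongr
      _ = _ := by ring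
  have f4 : η * N / Real.log N = η / 6 * N / Real.log N + 3 * (η / 18 * N / Real.log N) + (2 * η / 3) * N / Real.log N := by ring
  rw [f4]
  linarith

lemma abel_log (f : ℕ → ℂ) (M : ℝ) (N : ℕ) (h : ∀ X ≤ N, ‖∑ n ∈ Finset.Ioc 0 X, f n‖ ≤ M) :
    ‖∑ n ∈ Finset.Ioc 0 N, (Real.log n : ℂ) * f n‖ ≤ 2 * M * Real.log N := by
  have key : ∀ X ≤ N, ‖∑ n ∈ Finset.Ioc 0 X, (Real.log n : ℂ) * f n - Real.log X * ∑ n ∈ Finset.Ioc 0 X, f n‖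
      ≤ M * Real.log X := by
    intro X
    induction X with
    | zero => intro _; simp
    | succ X ih =>
      intro hX
      have h1 := ih (by omega)
      rw [Finset.sum_Ioc_succ_top (by omega), Finset.sum_Ioc_succ_top (by omega)]
      have hm : Real.log X ≤ Real.log ((X+1:ℕ):ℝ) := by
        rcases Nat.eq_zero_or_pos X with h0 | h0
        · subst h0; simp
        · apply Real.log_le_log (by exact_mod_cast h0); push_cast; linarith
      have e : ∑ n ∈ Finset.Ioc 0 X, (Real.log n : ℂ) * f n + (Real.log (X+1:ℕ) : ℂ) * f (X+1)
          - (Real.log (X+1:ℕ) : ℂ) * (∑ n ∈ Finset.Ioc 0 X, f n + f (X+1)) =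
          (∑ n ∈ Finset.Ioc 0 X, (Real.log n : ℂ) * f n - Real.log X * ∑ n ∈ Finset.Ioc 0 X, f n)
          - ((Real.log (X+1:ℕ) - Real.log X : ℝ) : ℂ) * ∑ n ∈ Finset.Ioc 0 X, f n := by
        push_cast; ring
      rw [e]
      refine (norm_sub_le _ _).trans ?_
      rw [norm_mul, Complex.norm_real, Real.norm_eq_abs, abs_of_nonneg (by linarith)]
      have h2 := mul_le_mul_of_nonneg_left (h X (by omega)) (show 0 ≤ Real.log (X+1:ℕ) - Real.log X by linarith)
      linarith
  have h1 := key N le_rfl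
  have h2 := h N le_rfl
  have h3 : ‖(Real.log N : ℂ) * ∑ n ∈ Finset.Ioc 0 N, f n‖ ≤ Real.log N * M := by
    rw [norm_mul, Complex.norm_real, Real.norm_eq_abs, abs_of_nonneg (Real.log_natCast_nonneg N)]
    exact mul_le_mul_of_nonneg_left h2 (Real.log_natCast_nonneg N)
  have h4 := norm_add_le (∑ n ∈ Finset.Ioc 0 N, (Real.log n : ℂ) * f n - Real.log N * ∑ n ∈ Finset.Ioc 0 N, f n)
    ((Real.log N : ℂ) * ∑ n ∈ Finset.Ioc 0 N, f n)
  rw [sub_add_cancel] at h4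
  linarith

lemma ind_mul (P : Finset ℕ) (hP : ∀ p ∈ P, p.Prime) (a b : ℕ) : ind P (a * b) = ind P a * ind P b := by
  have h : (∀ p ∈ P, ¬ p ∣ a * b) ↔ (∀ p ∈ P, ¬ p ∣ a) ∧ (∀ p ∈ P, ¬ p ∣ b) := by
    constructor
    · intro h
      exact ⟨fun p hp hd => h p hp (hd.mul_right b), fun p hp hd => h p hp (hd.mul_left a)⟩
    · rintro ⟨h1, h2⟩ p hp hd
      rcases (hP p hp).dvd_mul.1 hd with h | h
      · exact h1 p hp h
      · exact h2 p hp h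
  unfold ind
  by_cases h1 : ∀ p ∈ P, ¬ p ∣ a
  · by_cases h2 : ∀ p ∈ P, ¬ p ∣ b
    · rw [if_pos h1, if_pos h2, if_pos (h.2 ⟨h1, h2⟩)]; norm_num
    · rw [if_neg h2, if_neg (fun h3 => h2 (h.1 h3).2)]; norm_num
  · rw [if_neg h1, if_neg (fun h3 => h1 (h.1 h3).1)]; norm_num

lemma ind_prime (z : ℝ) (p : ℕ) (hp : p.Prime) : ind (PB z) p = if z ≤ p then 1 else 0 := by
  unfold ind
  congr 1
  rw [eq_iff_iff]
  constructor
  · intro h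
    by_contra hz
    push Not at hz
    exact h p (mem_PB.2 ⟨hp, hz⟩) dvd_rfl
  · intro h r hr hd
    have := mem_PB.1 hr
    rw [(Nat.prime_dvd_prime_iff_eq this.1 hp).1 hd] at this
    linarith [this.2]

lemma ind_one (P : Finset ℕ) (hP : ∀ p ∈ P, p.Prime) : ind P 1 = 1 := by
  unfold ind
  rw [if_pos]
  intro p hp hd
  exact (hP p hp).one_lt.ne' (Nat.dvd_one.1 hd)

lemma ind_rough (z : ℝ) (m : ℕ) (hm : 1 < m) (h : ind (PB z) m ≠ 0) : z ≤ m := by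
  by_contra hz
  push Not at hz
  apply h
  unfold ind
  rw [if_neg]
  intro h2
  have hp : m.minFac.Prime := Nat.minFac_prime hm.ne'
  refine h2 m.minFac (mem_PB.2 ⟨hp, ?_⟩) (Nat.minFac_dvd m)
  have : (m.minFac : ℝ) ≤ m := by exact_mod_cast Nat.minFac_le (by omega)
  linarith

/-- rough numbers bigger than one -/
noncomputable def cc (z : ℝ) (m : ℕ) : ℝ := if 1 < m then ind (PB z) m else 0

/-- the bilinear remainder -/
noncomputable def TII (z α : ℝ) (N : ℕ) : ℂ :=
  ∑ p ∈ (Finset.Ioc 0 N).filter (fun p : ℕ => p.Prime ∧ z ≤ (p:ℝ)), (Real.log p : ℂ) *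
    ∑ m ∈ Finset.Ioc 0 (N / p), (cc z m : ℂ) * ee (m * (p * α))

/-- radical log -/
noncomputable def gl (n : ℕ) : ℝ := ∑ p ∈ n.primeFactors, Real.log p

lemma gl_le (n : ℕ) (hn : 0 < n) : gl n ≤ Real.log n := by
  unfold gl
  rw [← Real.log_prod (fun p hp => by exact_mod_cast (Nat.prime_of_mem_primeFactors hp).ne_zero)]
  apply Real.log_le_log
  · apply Finset.prod_pos
    intro p hp; exact_mod_cast (Nat.prime_of_mem_primeFactors hp).pos
  · have := Nat.le_of_dvd hn (Nat.prod_primeFactors_dvd n)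
    rw [← Nat.cast_prod]
    exact Nat.cast_le.2 this

lemma gl_sqf (n : ℕ) (hn : Squarefree n) : gl n = Real.log n := by
  unfold gl
  rw [← Real.log_prod (fun p hp => by exact_mod_cast (Nat.prime_of_mem_primeFactors hp).ne_zero)]
  congr 1
  rw [← Nat.cast_prod, Nat.prod_primeFactors_of_squarefree hn]

lemma gl_nonneg (n : ℕ) : 0 ≤ gl n := Finset.sum_nonneg (fun p _ => Real.log_natCast_nonneg p)

lemma S2_eq (z α : ℝ) (N : ℕ) :
    ∑ n ∈ Finset.Ioc 0 N, (gl n : ℂ) * ((ind (PB z) n : ℂ) * ee (n * α)) =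
      ∑ p ∈ (Finset.Ioc 0 N).filter (fun p : ℕ => p.Prime ∧ z ≤ (p:ℝ)), (Real.log p : ℂ) * ee (p * α) + TII z α N := by
  have hPB : ∀ p ∈ PB z, p.Prime := fun p hp => (mem_PB.1 hp).1
  have hg : ∀ n ∈ Finset.Ioc 0 N, (gl n : ℂ) * ((ind (PB z) n : ℂ) * ee (n * α)) =
      ∑ p ∈ (Finset.Ioc 0 N).filter Nat.Prime, if p ∣ n then (Real.log p : ℂ) * ((ind (PB z) n : ℂ) * ee (n * α)) else 0 := by
    intro n hn
    rw [Finset.mem_Ioc] at hn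
    rw [← Finset.sum_filter]
    unfold gl
    push_cast
    rw [Finset.sum_mul]
    apply Finset.sum_congr _ (fun _ _ => rfl)
    ext p
    simp only [Nat.mem_primeFactors, Finset.mem_filter, Finset.mem_Ioc]
    constructor
    · rintro ⟨h1, h2, h3⟩
      exact ⟨⟨⟨h1.pos, (Nat.le_of_dvd hn.1 h2).trans hn.2⟩, h1⟩, h2⟩
    · rintro ⟨⟨⟨h1, h2⟩, h3⟩, h4⟩
      exact ⟨h3, h4, by omega⟩
  rw [Finset.sum_congr rfl hg, Finset.sum_comm]
  unfold TII
  rw [← Finset.sum_add_distrib, ← Finset.filter_filter, Finset.sum_filter (p := fun p : ℕ => z ≤ p)]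
  apply Finset.sum_congr rfl
  intro p hp
  rw [Finset.mem_filter, Finset.mem_Ioc] at hp
  rw [← Finset.sum_filter, sum_dvd N p hp.2.pos]
  have e1 : ∀ m, (Real.log p : ℂ) * ((ind (PB z) (p*m) : ℂ) * ee ((p*m : ℕ) * α)) =
      (ind (PB z) p : ℂ) * ((Real.log p : ℂ) * ((ind (PB z) m : ℂ) * ee (m * (p * α)))) := by
    intro m
    rw [ind_mul _ hPB]
    rw [show ((p*m:ℕ):ℝ) * α = m * (p * α) by push_cast; ring]
    push_cast; ring
  simp_rw [e1]
  rw [← Finset.mul_sum, ind_prime z p hp.2]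
  split_ifs with hz
  · push_cast
    rw [one_mul, ← Finset.mul_sum, ← mul_add]
    congr 1
    have e2 : ∀ m ∈ Finset.Ioc 0 (N/p), (ind (PB z) m : ℂ) * ee (m * (p * α)) =
        (if m = 1 then ee (p * α) else 0) + (cc z m : ℂ) * ee (m * (p * α)) := by
      intro m hm
      rw [Finset.mem_Ioc] at hm
      unfold cc
      by_cases h1 : m = 1
      · subst h1
        rw [ind_one _ hPB]; simp
      · rw [if_neg h1, if_pos (by omega), zero_add]
    rw [Finset.sum_congr rfl e2, Finset.sum_add_distrib, Finset.sum_ite_eq', if_pos]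
    rw [Finset.mem_Ioc]
    exact ⟨one_pos, Nat.div_pos hp.1.2 hp.2.pos⟩
  · simp

lemma S1_S2 (z α : ℝ) (hz : 1 ≤ z) (N : ℕ) :
    ‖∑ n ∈ Finset.Ioc 0 N, (Real.log n : ℂ) * ((ind (PB z) n : ℂ) * ee (n * α)) -
      ∑ n ∈ Finset.Ioc 0 N, (gl n : ℂ) * ((ind (PB z) n : ℂ) * ee (n * α))‖ ≤ 2 * N * Real.log N / z := by
  set k := ⌈z⌉₊ - 1 with hk
  have hzc : 1 ≤ ⌈z⌉₊ := Nat.one_le_ceil_iff.2 (by linarith)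
  rw [← Finset.sum_sub_distrib]
  refine (norm_sum_le _ _).trans ?_
  have hl := Real.log_natCast_nonneg N
  have h1 : ∀ n ∈ Finset.Ioc 0 N, ‖(Real.log n : ℂ) * ((ind (PB z) n : ℂ) * ee (n * α)) -
      (gl n : ℂ) * ((ind (PB z) n : ℂ) * ee (n * α))‖ ≤
      Real.log N * ∑ d ∈ Finset.Ioo k (N+1), if d ^ 2 ∣ n then (1:ℝ) else 0 := by
    intro n hn
    rw [Finset.mem_Ioc] at hn
    have hn' : (0:ℝ) < n := by exact_mod_cast hn.1
    have e : (Real.log n : ℂ) * ((ind (PB z) n : ℂ) * ee (n * α)) -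
      (gl n : ℂ) * ((ind (PB z) n : ℂ) * ee (n * α)) = (((Real.log n - gl n) * ind (PB z) n : ℝ) : ℂ) * ee (n * α) := by
      push_cast; ring
    have h2 := gl_le n hn.1
    have hi := ind_nonneg (PB z) n
    rw [e, norm_mul, ee_norm, mul_one, Complex.norm_real, Real.norm_eq_abs,
      abs_of_nonneg (mul_nonneg (by linarith) hi)]
    have hnn : 0 ≤ ∑ d ∈ Finset.Ioo k (N+1), if d ^ 2 ∣ n then (1:ℝ) else 0 :=
      Finset.sum_nonneg (fun d _ => by split_ifs <;> norm_num)
    by_cases hs : Squarefree n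
    · rw [gl_sqf n hs]; simp; positivity
    · rw [Nat.squarefree_iff_prime_squarefree] at hs
      push Not at hs
      obtain ⟨p, hp, hpn⟩ := hs
      by_cases h0 : ind (PB z) n = 0
      · rw [h0, mul_zero]; positivity
      have hpz : z ≤ p := by
        by_contra hlt
        push Not at hlt
        apply h0
        unfold ind
        rw [if_neg]
        intro h
        exact h p (mem_PB.2 ⟨hp, hlt⟩) ((dvd_mul_right p p).trans hpn)
      have hpN : p ≤ N := (Nat.le_of_dvd hn.1 ((dvd_mul_right p p).trans hpn)).trans hn.2
      have hkp : k < p := by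
        have : ⌈z⌉₊ ≤ p := Nat.ceil_le.2 hpz
        omega
      have h3 : (1:ℝ) ≤ ∑ d ∈ Finset.Ioo k (N+1), if d ^ 2 ∣ n then (1:ℝ) else 0 := by
        refine le_trans ?_ (Finset.single_le_sum (f := fun d : ℕ => if d ^ 2 ∣ n then (1:ℝ) else 0)
          (fun d _ => by split_ifs <;> norm_num) (Finset.mem_Ioo.2 ⟨hkp, Nat.lt_succ_of_le hpN⟩))
        rw [if_pos (by rw [pow_two]; exact hpn)]
      have h4 : Real.log n ≤ Real.log N := Real.log_le_log hn' (by exact_mod_cast hn.2)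
      have h5 := gl_nonneg n
      have h6 := ind_le_one (PB z) n
      calc (Real.log n - gl n) * ind (PB z) n ≤ Real.log N * 1 := by
            apply mul_le_mul (by linarith) h6 hi hl
        _ ≤ _ := by gcongr
  refine (Finset.sum_le_sum h1).trans ?_
  rw [← Finset.mul_sum, Finset.sum_comm]
  have h2 : ∀ d ∈ Finset.Ioo k (N+1), ∑ n ∈ Finset.Ioc 0 N, (if d ^ 2 ∣ n then (1:ℝ) else 0) ≤ N * ((d:ℝ)^2)⁻¹ := by
    intro d _
    rw [Finset.sum_boole, Nat.Ioc_filter_dvd_card_eq_div]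
    refine Nat.cast_div_le.trans (le_of_eq ?_)
    push_cast; rw [div_eq_mul_inv]
  have h3 := Finset.sum_le_sum h2
  rw [← Finset.mul_sum] at h3
  have h4 := sum_Ioo_inv_sq_le (α := ℝ) k (N+1)
  have h5 : (2:ℝ) / (k + 1) ≤ 2 / z := by
    apply div_le_div_of_nonneg_left (by norm_num) (by linarith)
    rw [hk, Nat.cast_sub hzc]
    have := Nat.le_ceil z
    push_cast; linarith
  calc _ ≤ Real.log N * (N * (2 / z)) := by
        apply mul_le_mul_of_nonneg_left _ hl
        refine h3.trans ?_
        apply mul_le_mul_of_nonneg_left (h4.trans h5) (by positivity)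
    _ = _ := by ring

lemma theta_exp_le (z α : ℝ) (hz : 1 ≤ z) (N : ℕ) :
    ‖∑ p ∈ (Finset.Ioc 0 N).filter Nat.Prime, (Real.log p : ℂ) * ee (p * α)‖ ≤
      ‖∑ n ∈ Finset.Ioc 0 N, (Real.log n : ℂ) * ((ind (PB z) n : ℂ) * ee (n * α))‖ + 2 * N * Real.log N / z
      + Real.log 4 * z + ‖TII z α N‖ := by
  have h1 := S1_S2 z α hz N
  rw [S2_eq] at h1
  set S1 := ∑ n ∈ Finset.Ioc 0 N, (Real.log n : ℂ) * ((ind (PB z) n : ℂ) * ee (n * α))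
  have h2 : ∑ p ∈ (Finset.Ioc 0 N).filter Nat.Prime, (Real.log p : ℂ) * ee (p * α) =
    ∑ p ∈ (Finset.Ioc 0 N).filter (fun p : ℕ => p.Prime ∧ z ≤ (p:ℝ)), (Real.log p : ℂ) * ee (p * α) +
    ∑ p ∈ (Finset.Ioc 0 N).filter (fun p : ℕ => p.Prime ∧ ¬ z ≤ (p:ℝ)), (Real.log p : ℂ) * ee (p * α) := by
    rw [← Finset.filter_filter, ← Finset.filter_filter, Finset.sum_filter_add_sum_filter_not]
  set T := ∑ p ∈ (Finset.Ioc 0 N).filter (fun p : ℕ => p.Prime ∧ z ≤ (p:ℝ)), (Real.log p : ℂ) * ee (p * α)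
  have h3 : ‖∑ p ∈ (Finset.Ioc 0 N).filter (fun p : ℕ => p.Prime ∧ ¬ z ≤ (p:ℝ)), (Real.log p : ℂ) * ee (p * α)‖ ≤ Real.log 4 * z := by
    refine (norm_sum_le _ _).trans ?_
    refine le_trans ?_ (Chebyshev.theta_le_log4_mul_x (x := z) (by linarith))
    rw [Chebyshev.theta]
    have : ∀ p ∈ (Finset.Ioc 0 N).filter (fun p : ℕ => p.Prime ∧ ¬ z ≤ (p:ℝ)), ‖(Real.log p : ℂ) * ee (p * α)‖ = Real.log p := by
      intro p _
      rw [norm_mul, ee_norm, mul_one, Complex.norm_real, Real.norm_eq_abs, abs_of_nonneg (Real.log_natCast_nonneg p)]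
    rw [Finset.sum_congr rfl this]
    apply Finset.sum_le_sum_of_subset_of_nonneg
    · intro p hp
      rw [Finset.mem_filter, Finset.mem_Ioc] at hp
      rw [Finset.mem_filter, Finset.mem_Ioc]
      exact ⟨⟨hp.1.1, Nat.le_floor (by linarith [hp.2.2])⟩, hp.2.1⟩
    · intro p _ _; exact Real.log_natCast_nonneg p
  rw [h2]
  have h4 : T = S1 - (S1 - (T + TII z α N)) - TII z α N := by ring
  have h5 : ‖T‖ ≤ ‖S1‖ + ‖S1 - (T + TII z α N)‖ + ‖TII z α N‖ := by
    calc ‖T‖ = ‖S1 - (S1 - (T + TII z α N)) - TII z α N‖ := by rw [← h4]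
      _ ≤ _ := (norm_sub_le _ _).trans (by gcongr; exact norm_sub_le _ _)
  refine (norm_add_le _ _).trans ?_
  linarith

lemma cs_complex (s : Finset ℕ) (c : ℕ → ℝ) (hc : ∀ m, 0 ≤ c m) (F : ℕ → ℂ) :
    ‖∑ m ∈ s, (c m : ℂ) * F m‖ ^ 2 ≤ (∑ m ∈ s, c m) * ∑ m ∈ s, c m * ‖F m‖ ^ 2 := by
  have h1 : ‖∑ m ∈ s, (c m : ℂ) * F m‖ ≤ ∑ m ∈ s, Real.sqrt (c m) * (Real.sqrt (c m) * ‖F m‖) := by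
    refine (norm_sum_le _ _).trans (le_of_eq ?_)
    apply Finset.sum_congr rfl
    intro m _
    rw [norm_mul, Complex.norm_real, Real.norm_eq_abs, abs_of_nonneg (hc m), ← mul_assoc, Real.mul_self_sqrt (hc m)]
  have h2 := Finset.sum_mul_sq_le_sq_mul_sq s (fun m => Real.sqrt (c m)) (fun m => Real.sqrt (c m) * ‖F m‖)
  have h3 := pow_le_pow_left₀ (norm_nonneg _) h1 2
  refine h3.trans (h2.trans (le_of_eq ?_))
  congr 1
  · exact Finset.sum_congr rfl (fun m _ => Real.sq_sqrt (hc m))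
  · apply Finset.sum_congr rfl
    intro m _
    rw [mul_pow, Real.sq_sqrt (hc m)]

lemma block_bound (α : ℝ) (N P : ℕ) (hP : 0 < P) (I : Finset ℕ) (hI : ∀ p ∈ I, P ≤ p)
    (c u : ℕ → ℝ) (hc : ∀ m, 0 ≤ c m) (hcu : ∀ m, c m ≤ u m) (l : ℕ → ℝ) (L : ℝ) 
    (hl : ∀ p ∈ I, |l p| ≤ L) (r : ℕ → ℕ → Prop) [∀ p, DecidablePred (r p)] (A A' C U : ℝ) (hA' : 0 ≤ A') (hA : 0 ≤ A) (hC : 0 ≤ C)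
    (hU : ∑ m ∈ Finset.Ioc 0 (N / P), u m ≤ U)
    (h1 : ∀ p ∈ I, ((I.filter (r p)).card : ℝ) ≤ C)
    (h2 : ∀ p ∈ I, ∀ p' ∈ I, ∀ X ≤ N / P, r p p' → ‖∑ m ∈ Finset.Ioc 0 X, (u m : ℂ) * ee (m * ((((p:ℤ) - p' : ℤ) : ℝ) * α))‖ ≤ A)
    (h3 : ∀ p ∈ I, ∀ p' ∈ I, ∀ X ≤ N / P, ¬ r p p' → ‖∑ m ∈ Finset.Ioc 0 X, (u m : ℂ) * ee (m * ((((p:ℤ) - p' : ℤ) : ℝ) * α))‖ ≤ A') :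
    ‖∑ p ∈ I, (l p : ℂ) * ∑ m ∈ Finset.Ioc 0 (N / p), (c m : ℂ) * ee (m * (p * α))‖ ^ 2 ≤
      U * L ^ 2 * (I.card * (C * A + I.card * A')) := by
  classical
  have hu : ∀ m, 0 ≤ u m := fun m => (hc m).trans (hcu m)
  set M := N / P with hM
  set F : ℕ → ℂ := fun m => ∑ p ∈ I, if m ≤ N / p then (l p : ℂ) * ee (m * (p * α)) else 0 with hF
  have hsub : ∀ p ∈ I, N / p ≤ M := fun p hp => Nat.div_le_div_left (hI p hp) hP
  have e1 : ∑ p ∈ I, (l p : ℂ) * ∑ m ∈ Finset.Ioc 0 (N / p), (c m : ℂ) * ee (m * (p * α)) =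
      ∑ m ∈ Finset.Ioc 0 M, (c m : ℂ) * F m := by
    simp only [hF, Finset.mul_sum]
    rw [Finset.sum_comm (s := Finset.Ioc 0 M)]
    apply Finset.sum_congr rfl
    intro p hp
    rw [← Finset.sum_subset (s₁ := Finset.Ioc 0 (N/p)) (Finset.Ioc_subset_Ioc_right (hsub p hp))]
    · apply Finset.sum_congr rfl
      intro m hm
      rw [if_pos (Finset.mem_Ioc.1 hm).2]; ring
    · intro m hm hm2
      rw [if_neg, mul_zero]
      intro h
      exact hm2 (Finset.mem_Ioc.2 ⟨(Finset.mem_Ioc.1 hm).1, h⟩)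
  rw [e1]
  refine (cs_complex _ c hc F).trans ?_
  have e2 : ∑ m ∈ Finset.Ioc 0 M, c m ≤ U := (Finset.sum_le_sum (fun m _ => hcu m)).trans hU
  have hU0 : 0 ≤ U := (Finset.sum_nonneg (fun m _ => hc m)).trans e2
  have e3 : ∑ m ∈ Finset.Ioc 0 M, c m * ‖F m‖ ^ 2 ≤ ∑ m ∈ Finset.Ioc 0 M, u m * ‖F m‖ ^ 2 :=
    Finset.sum_le_sum (fun m _ => mul_le_mul_of_nonneg_right (hcu m) (by positivity))
  have e4 : ((∑ m ∈ Finset.Ioc 0 M, u m * ‖F m‖ ^ 2 : ℝ) : ℂ) = 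
      ∑ p ∈ I, ∑ p' ∈ I, ((l p : ℂ) * (l p' : ℂ)) * ∑ m ∈ Finset.Ioc 0 (min (N/p) (N/p')), (u m : ℂ) * ee (m * ((((p:ℤ) - p' : ℤ) : ℝ) * α)) := by
    push_cast
    have : ∀ m, (u m : ℂ) * (‖F m‖ : ℂ) ^ 2 = ∑ p ∈ I, ∑ p' ∈ I, if m ≤ min (N/p) (N/p') then
        ((l p : ℂ) * (l p' : ℂ)) * ((u m : ℂ) * ee (m * ((((p:ℤ) - p' : ℤ) : ℝ) * α))) else 0 := by
      intro m
      rw [← Complex.mul_conj', hF]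
      simp only [map_sum]
      rw [Finset.sum_mul_sum, Finset.mul_sum]
      apply Finset.sum_congr rfl
      intro p _
      rw [Finset.mul_sum]
      apply Finset.sum_congr rfl
      intro p' _
      by_cases ha : m ≤ N / p
      · by_cases hb : m ≤ N / p'
        · rw [if_pos ha, if_pos hb, if_pos (le_min ha hb), map_mul, ee_conj, Complex.conj_ofReal]
          rw [show (m:ℝ) * ((((p:ℤ) - p' : ℤ) : ℝ) * α) = m * (p * α) + -(m * (p' * α)) by push_cast; ring, ee_add]
          ring
        · rw [if_neg hb, if_neg (fun h => hb (le_min_iff.1 h).2)]; simp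
      · rw [if_neg ha, if_neg (fun h => ha (le_min_iff.1 h).1)]; simp
    rw [Finset.sum_congr rfl (fun m _ => this m), Finset.sum_comm]
    apply Finset.sum_congr rfl
    intro p hp
    rw [Finset.sum_comm]
    apply Finset.sum_congr rfl
    intro p' hp'
    rw [Finset.mul_sum]
    symm
    rw [← Finset.sum_subset (s₁ := Finset.Ioc 0 (min (N/p) (N/p'))) (s₂ := Finset.Ioc 0 M) (Finset.Ioc_subset_Ioc_right ((min_le_left _ _).trans (hsub p hp)))]
    · apply Finset.sum_congr rfl
      intro m hm
      rw [if_pos (Finset.mem_Ioc.1 hm).2]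
      push_cast; rfl
    · intro m hm hm2
      rw [if_neg]
      intro h
      exact hm2 (Finset.mem_Ioc.2 ⟨(Finset.mem_Ioc.1 hm).1, h⟩)
  have e5 : ∑ m ∈ Finset.Ioc 0 M, u m * ‖F m‖ ^ 2 ≤ L ^ 2 * (I.card * (C * A + I.card * A')) := by
    have h0 : 0 ≤ ∑ m ∈ Finset.Ioc 0 M, u m * ‖F m‖ ^ 2 := Finset.sum_nonneg (fun m _ => mul_nonneg (hu m) (by positivity))
    rw [← abs_of_nonneg h0, ← Real.norm_eq_abs, ← Complex.norm_real, e4]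
    refine (norm_sum_le _ _).trans ?_
    have : ∀ p ∈ I, ‖∑ p' ∈ I, ((l p : ℂ) * (l p' : ℂ)) * ∑ m ∈ Finset.Ioc 0 (min (N/p) (N/p')), (u m : ℂ) * ee (m * ((((p:ℤ) - p' : ℤ) : ℝ) * α))‖ ≤ L ^ 2 * (C * A + I.card * A') := by
      intro p hp
      refine (norm_sum_le _ _).trans ?_
      have h4 : ∀ p' ∈ I, ‖((l p : ℂ) * (l p' : ℂ)) * ∑ m ∈ Finset.Ioc 0 (min (N/p) (N/p')), (u m : ℂ) * ee (m * ((((p:ℤ) - p' : ℤ) : ℝ) * α))‖ ≤ L ^ 2 * ((if r p p' then A else 0) + A') := by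
        intro p' hp'
        rw [norm_mul, norm_mul, Complex.norm_real, Complex.norm_real, Real.norm_eq_abs, Real.norm_eq_abs, pow_two]
        have hL : 0 ≤ L := (abs_nonneg _).trans (hl p hp)
        have hX : min (N/p) (N/p') ≤ M := (min_le_left _ _).trans (hsub p hp)
        apply mul_le_mul (mul_le_mul (hl p hp) (hl p' hp') (abs_nonneg _) hL) _ (norm_nonneg _) (by positivity)
        split_ifs with hr
        · exact (h2 p hp p' hp' _ hX hr).trans (by linarith)
        · exact (h3 p hp p' hp' _ hX hr).trans (by linarith)
      refine (Finset.sum_le_sum h4).trans ?_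
      rw [← Finset.mul_sum, Finset.sum_add_distrib, ← Finset.sum_filter, Finset.sum_const, Finset.sum_const, nsmul_eq_mul, nsmul_eq_mul]
      have := h1 p hp
      gcongr
    refine (Finset.sum_le_sum this).trans (le_of_eq ?_)
    rw [Finset.sum_const, nsmul_eq_mul]; ring
  calc _ ≤ U * (L ^ 2 * (I.card * (C * A + I.card * A'))) := 
        mul_le_mul e2 (e3.trans e5) (Finset.sum_nonneg (fun m _ => mul_nonneg (hc m) (by positivity))) hU0
    _ = _ := by ring

lemma cc_nonneg (z : ℝ) (m : ℕ) : 0 ≤ cc z m := by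
  unfold cc; split_ifs
  · exact ind_nonneg _ _
  · exact le_rfl

lemma cc_le (z : ℝ) (m : ℕ) : cc z m ≤ ind (PB z) m := by
  unfold cc; split_ifs
  · exact le_rfl
  · exact ind_nonneg _ _

lemma ind_anti {P Q : Finset ℕ} (h : P ⊆ Q) (n : ℕ) : ind Q n ≤ ind P n := by
  unfold ind
  by_cases h1 : ∀ p ∈ Q, ¬ p ∣ n
  · rw [if_pos h1, if_pos (fun p hp => h1 p (h hp))]
  · rw [if_neg h1]; split_ifs <;> norm_num

lemma block1 : ∃ K : ℝ, 1 ≤ K ∧ ∀ (y α : ℝ) (N P q : ℕ), 2 ≤ y → Apx α (N / y ^ 32) q → (q : ℝ) ≤ y ^ 8 →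
    y ^ 64 / 2 ≤ P → P * y ^ 64 ≤ N → ∀ (I : Finset ℕ) (l : ℕ → ℝ) (L : ℝ),
    (∀ p ∈ I, p.Prime ∧ y ^ 64 ≤ p ∧ P ≤ p ∧ p < 2 * P) → (∀ p ∈ I, |l p| ≤ L) →
    ‖∑ p ∈ I, (l p : ℂ) * ∑ m ∈ Finset.Ioc 0 (N / p), (cc (y ^ 64) m : ℂ) * ee (m * (p * α))‖ ^ 2 ≤
      32 * L ^ 2 * N ^ 2 * (K * gq q / Real.log y) ^ 4 / q := by
  obtain ⟨K, hK, hs⟩ := sieve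
  refine ⟨K, hK, ?_⟩
  intro y α N P q hy hA hq hP hPN I l L hI hl
  obtain ⟨w, E, vw, vE, hw, -, hiw, -, -, hvw, -⟩ := hs 0 y (PQ y q) hy (fun p hp => (mem_PQ.1 hp).1)
  norm_num at hw
  have hq0 : 0 < q := hA.1
  have hqr : (0:ℝ) < q := by exact_mod_cast hq0
  have hy0 : 0 < y := by linarith
  have hy1 : 1 ≤ y := by linarith
  have hlog : 0 < Real.log y := Real.log_pos (by linarith)
  have hlogy : Real.log y ≤ y := (Real.log_le_sub_one_of_pos hy0).trans (by linarith)
  have hg1 := gq_ge_one q hq0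
  have hP0r : (0:ℝ) < P := lt_of_lt_of_le (by positivity) hP
  have hP0 : 0 < P := by exact_mod_cast hP0r
  have hPQ : ∀ p ∈ PQ y q, p.Prime := fun p hp => (mem_PQ.1 hp).1.1
  have hPQq : ∀ p ∈ PQ y q, ¬ p ∣ q := fun p hp => (mem_PQ.1 hp).2
  have hw0 : ∀ n, 0 ≤ w n := fun n => (ind_nonneg _ n).trans (hiw n)
  set V := K * gq q / Real.log y with hV
  have hvV : vw ≤ V := by
    refine hvw.trans ?_
    rw [hV, mul_div_assoc]
    exact mul_le_mul_of_nonneg_left (VV_PQ_le y hy q hq0) (by linarith)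
  have hVy : 1 / y ≤ V := by
    rw [hV]
    apply div_le_div₀ _ _ hlog hlogy
    · have : 0 ≤ K * gq q := by positivity
      exact this
    · nlinarith
  have hV0 : 0 < V := lt_of_lt_of_le (by positivity) hVy
  have hVy' : 1 ≤ V * y := by rwa [div_le_iff₀ hy0] at hVy
  set M : ℝ := N / P with hM
  have hMy : y ^ 64 ≤ M := by rw [hM, le_div_iff₀ hP0r]; linarith
  have hM0 : 0 < M := lt_of_lt_of_le (by positivity) hMy
  have hMP : M * P = N := by rw [hM]; field_simp
  -- power inequalities
  have hMV : y ^ 63 ≤ M * V := by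
    calc y ^ 63 = y ^ 64 * (1 / y) := by field_simp
      _ ≤ _ := by gcongr
  have hPV : y ^ 62 ≤ P * V := by
    have h1 : y ^ 63 ≤ P := by
      refine le_trans ?_ hP
      have : y ^ 63 * 2 ≤ y ^ 63 * y := by gcongr
      calc y ^ 63 = y ^ 63 * 2 / 2 := by ring
        _ ≤ y ^ 63 * y / 2 := by gcongr
        _ = _ := by ring
    calc y ^ 62 = y ^ 63 * (1 / y) := by field_simp
      _ ≤ _ := by gcongr
  have hD1 : y ^ 8 ≤ M * V := (pow_le_pow_right₀ hy1 (by norm_num)).trans hMV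
  have hD2 : y ^ 8 ≤ P / q * V := by
    rw [div_mul_eq_mul_div, le_div_iff₀ hqr]
    calc y ^ 8 * q ≤ y ^ 8 * y ^ 8 := by gcongr
      _ = y ^ 16 := by ring
      _ ≤ y ^ 62 := pow_le_pow_right₀ hy1 (by norm_num)
      _ ≤ _ := hPV
  have hD3 : y ^ 8 * q ≤ M * V / q := by
    rw [le_div_iff₀ hqr]
    calc y ^ 8 * q * q ≤ y ^ 8 * y ^ 8 * y ^ 8 := by gcongr
      _ = y ^ 24 := by ring
      _ ≤ y ^ 63 := pow_le_pow_right₀ hy1 (by norm_num)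
      _ ≤ _ := hMV
  have hD4 : y ^ 8 ≤ P * V := by
    exact (pow_le_pow_right₀ hy1 (by norm_num)).trans hPV
  have hXM : ∀ X : ℕ, X ≤ N / P → (X:ℝ) ≤ M := by
    intro X hX
    have : (X:ℝ) ≤ ((N / P : ℕ) : ℝ) := by exact_mod_cast hX
    exact this.trans Nat.cast_div_le
  have hsum : ∀ X : ℕ, X ≤ N / P → ∑ m ∈ Finset.Ioc 0 X, w m ≤ 2 * M * V := by
    intro X hX
    refine (hw.sum_le hPQ X).trans ?_
    have h1 : (X:ℝ) * vw ≤ M * V := mul_le_mul (hXM X hX) hvV (hw.nonneg hPQ hw0) hM0.le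
    linarith
  have hwp : ∀ p ∈ I, 1 ≤ w p := by
    intro p hp
    obtain ⟨h1, h2, -, -⟩ := hI p hp
    refine le_trans ?_ (hiw p)
    have : ind (PB (y^64)) p ≤ ind (PQ y q) p := by
      apply ind_anti
      intro r hr
      have := (mem_PQ.1 hr).1
      refine mem_PB.2 ⟨this.1, this.2.trans_le ?_⟩
      calc y = y ^ 1 := by ring
        _ ≤ _ := pow_le_pow_right₀ hy1 (by norm_num)
    rwa [ind_prime _ _ h1, if_pos h2] at this
  have hsubI : I ⊆ Finset.Ioc (P - 1) (2 * P - 1) := by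
    intro p hp
    obtain ⟨-, -, h3, h4⟩ := hI p hp
    rw [Finset.mem_Ioc]; omega
  have hcast : (((2 * P - 1 : ℕ) : ℝ) - ((P - 1 : ℕ) : ℝ)) = P := by
    rw [Nat.cast_sub (by omega), Nat.cast_sub (by omega)]; push_cast; ring
  have hcardI : (I.card : ℝ) ≤ 2 * P * V := by
    have h1 : (I.card : ℝ) ≤ ∑ p ∈ I, w p := by
      rw [Finset.cast_card]; exact Finset.sum_le_sum hwp
    have h2 : ∑ p ∈ I, w p ≤ ∑ p ∈ (Finset.Ioc (P-1) (2*P-1)).filter (· ≡ 0 [MOD 1]), w p := by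
      apply Finset.sum_le_sum_of_subset_of_nonneg
      · intro p hp
        rw [Finset.mem_filter]
        exact ⟨hsubI hp, Nat.modEq_one⟩
      · intro p _ _; exact hw0 p
    have h3 := hw.ap 1 one_pos (fun p hp hd => (hPQ p hp).one_lt.ne' (Nat.dvd_one.1 hd)) (P-1) (2*P-1) 0 (by omega)
    rw [hcast] at h3
    have h4 := (abs_le.1 h3).2
    have h5 : (P:ℝ) / (1:ℕ) * vw ≤ P * V := by
      rw [Nat.cast_one, div_one]; gcongr
    linarith
  have hcount : ∀ p ∈ I, ((I.filter (fun p' : ℕ => (q:ℤ) ∣ (p:ℤ) - (p':ℤ))).card : ℝ) ≤ 2 * (P / q * V) := by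
    intro p hp
    have h1 : ((I.filter (fun p' : ℕ => (q:ℤ) ∣ (p:ℤ) - (p':ℤ))).card : ℝ) ≤ ∑ p' ∈ I.filter (fun p' : ℕ => (q:ℤ) ∣ (p:ℤ) - (p':ℤ)), w p' := by
      rw [Finset.cast_card]; exact Finset.sum_le_sum (fun p' hp' => hwp p' (Finset.mem_filter.1 hp').1)
    have h2 : ∑ p' ∈ I.filter (fun p' : ℕ => (q:ℤ) ∣ (p:ℤ) - (p':ℤ)), w p' ≤ ∑ p' ∈ (Finset.Ioc (P-1) (2*P-1)).filter (· ≡ p [MOD q]), w p' := by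
      apply Finset.sum_le_sum_of_subset_of_nonneg
      · intro p' hp'
        rw [Finset.mem_filter] at hp' ⊢
        refine ⟨hsubI hp'.1, ?_⟩
        rw [Nat.modEq_iff_dvd]; exact hp'.2
      · intro p _ _; exact hw0 p
    have h3 := hw.ap q hq0 hPQq (P-1) (2*P-1) p (by omega)
    rw [hcast] at h3
    have h4 := (abs_le.1 h3).2
    have h5 : (P:ℝ) / q * vw ≤ P / q * V := by gcongr
    linarith
  have hmain := block_bound α N P hP0 I (fun p hp => (hI p hp).2.2.1) (cc (y^64)) w (cc_nonneg _)
    (fun m => (cc_le _ m).trans ((ind_anti (by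
      intro r hr
      have := (mem_PQ.1 hr).1
      refine mem_PB.2 ⟨this.1, this.2.trans_le ?_⟩
      calc y = y ^ 1 := by ring
        _ ≤ _ := pow_le_pow_right₀ hy1 (by norm_num)) m).trans (hiw m))) l L hl
    (fun p p' => (q:ℤ) ∣ (p:ℤ) - p') (2 * M * V) (y ^ 8 * q) (2 * (P / q * V)) (2 * M * V)
    (by positivity) (by positivity) (by positivity) (hsum _ le_rfl) hcount
    (by
      intro p _ p' _ X hX _
      refine (norm_sum_le _ _).trans (le_trans (le_of_eq ?_) (hsum X hX))
      apply Finset.sum_congr rfl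
      intro m _
      rw [norm_mul, ee_norm, mul_one, Complex.norm_real, Real.norm_eq_abs, abs_of_nonneg (hw0 m)])
    (by
      intro p hp p' hp' X hX hr
      have hN0 : (0:ℝ) < N := lt_of_lt_of_le (by positivity) hPN
      apply hw.exp_apx X hA (by positivity)
      · intro d hd0 hd hdP hdvd
        have hc := coprime_of_PQ hq0 hd0 hdP
        apply hr
        exact (Int.isCoprime_iff_gcd_eq_one.2 (by simpa using hc.symm) : IsCoprime (q:ℤ) (d:ℤ)).dvd_of_dvd_mul_left hdvd
      · have h1 : |(((p:ℤ) - p' : ℤ) : ℝ)| ≤ P := by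
          obtain ⟨-, -, h3, h4⟩ := hI p hp
          obtain ⟨-, -, h3', h4'⟩ := hI p' hp'
          rw [← Int.cast_abs]
          have : |(p:ℤ) - p'| ≤ P := by rw [abs_le]; omega
          exact_mod_cast this
        rw [div_div, le_div_iff₀ (by positivity)]
        refine le_trans ?_ hPN
        calc y ^ 8 * |(((p:ℤ) - p' : ℤ) : ℝ)| * (y ^ 32 * 2) ≤ y ^ 8 * P * (y ^ 32 * y) := by gcongr
          _ = P * y ^ 41 := by ring
          _ ≤ P * y ^ 64 := by
            gcongr
            norm_num)
  refine hmain.trans ?_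
  have hfin : (2 * ((P:ℝ) / q * V)) * (2 * M * V) + I.card * (y ^ 8 * q) ≤ 8 * (M * P * V ^ 2 / q) := by
    have : (I.card : ℝ) * (y ^ 8 * q) ≤ (2 * P * V) * (M * V / q) := by gcongr
    calc _ ≤ (2 * ((P:ℝ) / q * V)) * (2 * M * V) + (2 * P * V) * (M * V / q) := by linarith
      _ = 6 * (M * P * V ^ 2 / q) := by field_simp; ring
      _ ≤ _ := by
        have : 0 ≤ M * P * V ^ 2 / q := by positivity
        linarith
  calc _ ≤ (2 * M * V) * L ^ 2 * ((2 * P * V) * (8 * (M * P * V ^ 2 / q))) := by gcongr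
    _ = 32 * L ^ 2 * (M * P) ^ 2 * V ^ 4 / q := by ring
    _ = _ := by rw [hMP]

lemma sep_count (t : ℕ → ℝ) (δ ρ : ℝ) (hδ : 0 < δ) (hρ : 0 ≤ ρ) (S : Finset ℕ) (h : ∀ x ∈ S, |t x| ≤ ρ)
    (hs : ∀ x ∈ S, ∀ x' ∈ S, x ≠ x' → δ ≤ |t x - t x'|) : (S.card : ℝ) ≤ 2 * ρ / δ + 2 := by
  have h1 : S.card ≤ (Finset.Icc ⌊-(ρ / δ)⌋ ⌊ρ / δ⌋).card := by
    apply Finset.card_le_card_of_injOn (fun x => ⌊t x / δ⌋)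
    · intro x hx
      have := abs_le.1 (h x hx)
      rw [Finset.coe_Icc, Set.mem_Icc]
      constructor
      · apply Int.floor_le_floor
        rw [← neg_div]; gcongr; exact this.1
      · apply Int.floor_le_floor
        gcongr; exact this.2
    · intro x hx x' hx' he
      by_contra hne
      have h2 := hs x hx x' hx' hne
      have h3 := Int.abs_sub_lt_one_of_floor_eq_floor he
      rw [← sub_div, abs_div, abs_of_pos hδ, div_lt_one hδ] at h3
      linarith
  have hpos : 0 ≤ ρ / δ := by positivity
  have h4 : (((Finset.Icc ⌊-(ρ / δ)⌋ ⌊ρ / δ⌋).card : ℤ) : ℝ) ≤ 2 * ρ / δ + 2 := by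
    rw [Int.card_Icc, Int.toNat_of_nonneg]
    · push_cast
      have h5 := Int.floor_le (ρ / δ)
      have h6 := Int.lt_floor_add_one (-(ρ / δ))
      have : 2 * ρ / δ = ρ / δ + ρ / δ := by ring
      linarith
    · have : ⌊-(ρ / δ)⌋ ≤ ⌊ρ / δ⌋ := Int.floor_le_floor (by linarith)
      omega
  have h5 : (S.card : ℝ) ≤ ((Finset.Icc ⌊-(ρ / δ)⌋ ⌊ρ / δ⌋).card : ℝ) := by exact_mod_cast h1
  push_cast at h4
  linarith

open Classical in
lemma near_count (α Q : ℝ) (q : ℕ) (hA : Apx α Q q) (hQ : 0 < Q) (P : ℕ) (hP : 0 < P) (hPQ : (P:ℝ) ≤ Q / 2) (I : Finset ℕ)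
    (hI : ∀ p ∈ I, P ≤ p ∧ p < 2 * P) (ρ : ℝ) (hρ : 0 ≤ ρ) (p : ℕ) :
    ((I.filter (fun p' : ℕ => ∃ m : ℤ, |(((p:ℤ) - p' : ℤ) : ℝ) * α - m| < ρ)).card : ℝ) ≤ (4 * ρ * q + 2) * (P / q + 2) := by
  set S := I.filter (fun p' : ℕ => ∃ m : ℤ, |(((p:ℤ) - p' : ℤ) : ℝ) * α - m| < ρ) with hS
  have hq0 : 0 < q := hA.1
  have hqr : (0:ℝ) < q := by exact_mod_cast hq0
  have hm : ∀ p' : ℕ, ∃ m : ℤ, p' ∈ S → |(((p:ℤ) - p' : ℤ) : ℝ) * α - m| < ρ := by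
    intro p'
    by_cases h : p' ∈ S
    · obtain ⟨m, hm⟩ := (Finset.mem_filter.1 h).2
      exact ⟨m, fun _ => hm⟩
    · exact ⟨0, fun h' => absurd h' h⟩
  choose m hm using hm
  have h1 := Finset.card_le_mul_card_image (f := fun p' => p' / q) S ⌊4 * ρ * q + 2⌋₊ (by
    intro b _
    apply Nat.le_floor
    have := sep_count (fun p' => (((p:ℤ) - p' : ℤ) : ℝ) * α - m p') (1 / (2 * q)) ρ (by positivity) hρ (S.filter (fun p' => p' / q = b))
      (fun x hx => (hm x (Finset.mem_filter.1 hx).1).le) (by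
        intro x hx x' hx' hne
        obtain ⟨hx1, hx2⟩ := Finset.mem_filter.1 hx
        obtain ⟨hx1', hx2'⟩ := Finset.mem_filter.1 hx'
        have e : (((p:ℤ) - x : ℤ) : ℝ) * α - m x - ((((p:ℤ) - x' : ℤ) : ℝ) * α - m x') = (((x':ℤ) - x : ℤ) : ℝ) * α - ((m x - m x' : ℤ) : ℝ) := by
          push_cast; ring
        rw [e]
        have hd1 := Nat.div_add_mod x q
        have hd2 := Nat.div_add_mod x' q
        have hl1 := Nat.mod_lt x hq0
        have hl2 := Nat.mod_lt x' hq0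
        rw [hx2] at hd1
        rw [hx2'] at hd2
        apply hA.dist hQ
        · intro hdvd
          have := Int.eq_zero_of_abs_lt_dvd hdvd (by zify at hd1 hd2 hl1 hl2; rw [abs_lt]; constructor <;> omega)
          omega
        · refine le_trans ?_ hPQ
          have a1 := hI x (Finset.mem_filter.1 hx1).1
          have a2 := hI x' (Finset.mem_filter.1 hx1').1
          rw [← Int.cast_abs]
          have : |(x':ℤ) - x| ≤ P := by rw [abs_le]; omega
          exact_mod_cast this)
    refine this.trans (le_of_eq ?_)
    field_simp; ring)
  have h2 : (S.image (fun p' => p' / q)).card ≤ (Finset.Icc (P / q) (2 * P / q)).card := by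
    apply Finset.card_le_card
    intro b hb
    obtain ⟨x, hx, rfl⟩ := Finset.mem_image.1 hb
    have a1 := hI x (Finset.mem_filter.1 hx).1
    rw [Finset.mem_Icc]
    exact ⟨Nat.div_le_div_right a1.1, Nat.div_le_div_right a1.2.le⟩
  have h3 : ((Finset.Icc (P / q) (2 * P / q)).card : ℝ) ≤ P / q + 2 := by
    rw [Nat.card_Icc, Nat.cast_sub]
    · push_cast
      have e1 : ((2 * P / q : ℕ) : ℝ) ≤ ((2 * P : ℕ) : ℝ) / q := Nat.cast_div_le
      have e2 : (P : ℝ) / q ≤ ((P / q : ℕ) : ℝ) + 1 := by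
        rw [div_le_iff₀ hqr]
        have := Nat.div_add_mod P q
        have h5 := Nat.mod_lt P hq0
        have h6 : P ≤ (P / q + 1) * q := by nlinarith
        exact_mod_cast h6
      push_cast at e1
      have : 2 * (P:ℝ) / q = P / q + P / q := by ring
      linarith
    · have : P / q ≤ 2 * P / q := Nat.div_le_div_right (by omega)
      omega
  have h4 : (S.card : ℝ) ≤ (⌊4 * ρ * q + 2⌋₊ : ℝ) * ((S.image (fun p' => p' / q)).card : ℝ) := by exact_mod_cast h1
  refine h4.trans ?_
  apply mul_le_mul (Nat.floor_le (by positivity)) (le_trans (by exact_mod_cast h2) h3) (by positivity) (by positivity)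

lemma block2 (y α : ℝ) (N P q : ℕ) (hy : 2 ≤ y) (hA : Apx α (N / y ^ 32) q) (hqN : (q:ℝ) ≤ N / y ^ 32) (hq : y ^ 8 < (q : ℝ))
    (hP : y ^ 64 / 2 ≤ P) (hPN : P * y ^ 64 ≤ N) (I : Finset ℕ) (l : ℕ → ℝ) (L : ℝ)
    (hI : ∀ p ∈ I, p.Prime ∧ y ^ 64 ≤ p ∧ P ≤ p ∧ p < 2 * P) (hl : ∀ p ∈ I, |l p| ≤ L) :
    ‖∑ p ∈ I, (l p : ℂ) * ∑ m ∈ Finset.Ioc 0 (N / p), (cc (y ^ 64) m : ℂ) * ee (m * (p * α))‖ ^ 2 ≤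
      20 * L ^ 2 * N ^ 2 / y ^ 4 := by
  classical
  have hq0 : 0 < q := hA.1
  have hqr : (0:ℝ) < q := by exact_mod_cast hq0
  have hy0 : 0 < y := by linarith
  have hy1 : 1 ≤ y := by linarith
  have hP0r : (0:ℝ) < P := lt_of_lt_of_le (by positivity) hP
  have hP0 : 0 < P := by exact_mod_cast hP0r
  have hN0 : (0:ℝ) < N := lt_of_lt_of_le (by positivity) hPN
  set M : ℝ := N / P with hM
  have hMy : y ^ 64 ≤ M := by rw [hM, le_div_iff₀ hP0r]; linarith
  have hM0 : 0 < M := lt_of_lt_of_le (by positivity) hMy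
  have hMP : M * P = N := by rw [hM]; field_simp
  have hXM : ∀ X : ℕ, X ≤ N / P → (X:ℝ) ≤ M := by
    intro X hX
    have : (X:ℝ) ≤ ((N / P : ℕ) : ℝ) := by exact_mod_cast hX
    exact this.trans Nat.cast_div_le
  set ρ : ℝ := y ^ 4 / M with hρ
  have hρ0 : 0 < ρ := by positivity
  have hcardI : (I.card : ℝ) ≤ P := by
    have : I.card ≤ (Finset.Ico P (2 * P)).card := by
      apply Finset.card_le_card
      intro p hp
      exact Finset.mem_Ico.2 (hI p hp).2.2
    rw [Nat.card_Ico] at this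
    exact_mod_cast this.trans (by omega)
  have hc1 : ∀ m, cc (y^64) m ≤ 1 := fun m => (cc_le _ m).trans (ind_le_one _ m)
  have hPQ : (P:ℝ) ≤ N / y ^ 32 / 2 := by
    rw [div_div, le_div_iff₀ (by positivity)]
    refine le_trans ?_ hPN
    calc (P:ℝ) * (y ^ 32 * 2) ≤ P * (y ^ 32 * y) := by gcongr
      _ = P * y ^ 33 := by ring
      _ ≤ P * y ^ 64 := by
        gcongr
        norm_num
  have hmain := block_bound α N P hP0 I (fun p hp => (hI p hp).2.2.1) (cc (y^64)) (fun _ => 1) (cc_nonneg _)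
    hc1 l L hl
    (fun p p' => ∃ m : ℤ, |(((p:ℤ) - p' : ℤ) : ℝ) * α - m| < ρ) M (1 / (2 * ρ)) ((4 * ρ * q + 2) * (P / q + 2)) M
    (by positivity) (by positivity) (by positivity)
    (by simpa using hXM _ le_rfl)
    (fun p hp => by
      have := near_count α _ q hA (by positivity) P hP0 hPQ I (fun p hp => (hI p hp).2.2) ρ hρ0.le p
      convert this using 3)
    (by
      intro p _ p' _ X hX _
      refine (norm_sum_le _ _).trans (le_trans (le_of_eq ?_) (hXM X hX))
      simp [ee_norm])
    (by
      intro p hp p' hp' X hX hr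
      push Not at hr
      have := geom_bound _ ρ hρ0 hr X
      simpa using this)
  refine hmain.trans ?_
  have hC : (4 * ρ * q + 2) * ((P:ℝ) / q + 2) ≤ 18 * (P / y ^ 4) := by
    have e1 : ρ * P ≤ P / y ^ 4 := by
      rw [le_div_iff₀ (by positivity), hρ]
      have : y ^ 4 / M * y ^ 4 ≤ 1 := by
        rw [div_mul_eq_mul_div, div_le_one hM0]
        refine le_trans ?_ hMy
        calc y ^ 4 * y ^ 4 = y ^ 8 := by ring
          _ ≤ _ := pow_le_pow_right₀ hy1 (by norm_num)
      calc y ^ 4 / M * P * y ^ 4 = (P:ℝ) * (y ^ 4 / M * y ^ 4) := by ring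
        _ ≤ (P:ℝ) * 1 := by gcongr
        _ = (P:ℝ) := by ring
    have e2 : (P:ℝ) / q ≤ P / y ^ 4 := by
      apply div_le_div_of_nonneg_left hP0r.le (by positivity)
      exact (pow_le_pow_right₀ hy1 (by norm_num)).trans hq.le
    have e3 : ρ * q ≤ P / y ^ 4 := by
      rw [le_div_iff₀ (by positivity), hρ]
      calc y ^ 4 / M * q * y ^ 4 ≤ y ^ 4 / M * (N / y ^ 32) * y ^ 4 := by gcongr
        _ = P * (1 / y ^ 24) := by rw [← hMP]; field_simp
        _ ≤ P * 1 := by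
          gcongr
          rw [div_le_one (by positivity)]
          exact one_le_pow₀ hy1
        _ = (P:ℝ) := by ring
    have e4 : 1 ≤ (P:ℝ) / y ^ 4 := by
      rw [le_div_iff₀ (by positivity), one_mul]
      refine le_trans ?_ hP
      have h5 : y ^ 5 ≤ y ^ 64 := pow_le_pow_right₀ hy1 (by norm_num)
      have h6 : y ^ 4 * 2 ≤ y ^ 4 * y := by gcongr
      have h7 : y ^ 4 * y = y ^ 5 := by ring
      linarith
    have : (4 * ρ * q + 2) * ((P:ℝ) / q + 2) = 4 * (ρ * P) + 8 * (ρ * q) + 2 * (P / q) + 4 := by field_simp; ring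
    linarith
  have hA' : 1 / (2 * ρ) ≤ M / y ^ 4 := by
    rw [hρ, div_le_div_iff₀ (by positivity) (by positivity)]
    have : M * (2 * (y ^ 4 / M)) = 2 * y ^ 4 := by field_simp
    rw [this]
    have : 0 < y ^ 4 := by positivity
    linarith
  calc _ ≤ M * L ^ 2 * (P * ((18 * (P / y ^ 4)) * M + P * (M / y ^ 4))) := by gcongr
    _ = 19 * (L ^ 2 * (M * P) ^ 2 / y ^ 4) := by ring
    _ ≤ 20 * (L ^ 2 * (M * P) ^ 2 / y ^ 4) := by
      gcongr; norm_num
    _ = _ := by rw [hMP]; ring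

lemma TII_blocks (y α : ℝ) (N : ℕ) (hy : 2 ≤ y) (Bd : ℝ) (hBd : 0 ≤ Bd)
    (h : ∀ P : ℕ, y ^ 64 / 2 ≤ P → P * y ^ 64 ≤ N → ∀ I : Finset ℕ, 
      (∀ p ∈ I, p.Prime ∧ y ^ 64 ≤ p ∧ P ≤ p ∧ p < 2 * P) → (∀ p ∈ I, |Real.log p| ≤ Real.log N) → 
      ‖∑ p ∈ I, (Real.log p : ℂ) * ∑ m ∈ Finset.Ioc 0 (N / p), (cc (y ^ 64) m : ℂ) * ee (m * (p * α))‖ ^ 2 ≤ Bd ^ 2) :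
    ‖TII (y ^ 64) α N‖ ≤ (Nat.log 2 N + 1) * Bd := by
  unfold TII
  rw [← Finset.sum_fiberwise_of_maps_to (t := Finset.range (Nat.log 2 N + 1)) (g := fun p => Nat.log 2 p)]
  · refine (norm_sum_le _ _).trans ?_
    have key : ∀ i ∈ Finset.range (Nat.log 2 N + 1), 
      ‖∑ p ∈ ((Finset.Ioc 0 N).filter (fun p : ℕ => p.Prime ∧ y ^ 64 ≤ (p:ℝ))).filter (fun p => Nat.log 2 p = i), (Real.log p : ℂ) * 
        ∑ m ∈ Finset.Ioc 0 (N / p), (cc (y ^ 64) m : ℂ) * ee (m * (p * α))‖ ≤ Bd := by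
      intro i _
      set I := ((Finset.Ioc 0 N).filter (fun p : ℕ => p.Prime ∧ y ^ 64 ≤ (p:ℝ))).filter (fun p => Nat.log 2 p = i) with hI
      have hIp : ∀ p ∈ I, p.Prime ∧ y ^ 64 ≤ p ∧ 2 ^ i ≤ p ∧ p < 2 * 2 ^ i := by
        intro p hp
        simp only [hI, Finset.mem_filter, Finset.mem_Ioc] at hp
        obtain ⟨⟨⟨h1, h2⟩, h3, h4⟩, h5⟩ := hp
        refine ⟨h3, h4, ?_, ?_⟩
        · rw [← h5]; exact Nat.pow_log_le_self 2 (by omega)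
        · rw [← h5, mul_comm, ← pow_succ]; exact Nat.lt_pow_succ_log_self (by norm_num) p
      have hlog : ∀ p ∈ I, |Real.log p| ≤ Real.log N := by
        intro p hp
        rw [abs_of_nonneg (Real.log_natCast_nonneg p)]
        simp only [hI, Finset.mem_filter, Finset.mem_Ioc] at hp
        apply Real.log_le_log
        · exact_mod_cast hp.1.1.1
        · exact_mod_cast hp.1.1.2
      rcases I.eq_empty_or_nonempty with he | ⟨p0, hp0⟩
      · rw [he]; simpa using hBd
      have hP1 : y ^ 64 / 2 ≤ ((2 ^ i : ℕ) : ℝ) := by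
        obtain ⟨-, h2, -, h4⟩ := hIp p0 hp0
        have : (p0:ℝ) ≤ ((2 * 2 ^ i : ℕ) : ℝ) := by exact_mod_cast h4.le
        push_cast at this ⊢
        linarith
      by_cases hP2 : ((2 ^ i : ℕ) : ℝ) * y ^ 64 ≤ N
      · exact (sq_le_sq₀ (norm_nonneg _) hBd).1 (h (2 ^ i) hP1 hP2 I hIp hlog)
      · rw [Finset.sum_eq_zero, norm_zero]
        · exact hBd
        · intro p hp
          obtain ⟨hpp, -, h3, -⟩ := hIp p hp
          rw [Finset.sum_eq_zero, mul_zero]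
          intro m hm
          rw [Finset.mem_Ioc] at hm
          have : cc (y ^ 64) m = 0 := by
            unfold cc
            split_ifs with h1
            · by_contra hne
              have hr := ind_rough _ m h1 hne
              apply hP2
              have h5 : p * m ≤ N := (Nat.mul_le_mul_left p hm.2).trans (Nat.mul_div_le N p)
              have h5' : (p:ℝ) * m ≤ N := by exact_mod_cast h5
              refine le_trans ?_ h5'
              have : ((2 ^ i : ℕ) : ℝ) ≤ p := by exact_mod_cast h3
              gcongr
            · rfl
          rw [this]; simp
    refine (Finset.sum_le_sum key).trans (le_of_eq ?_)
    rw [Finset.sum_const, Finset.card_range, nsmul_eq_mul]; push_cast; ring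
  · intro p hp
    simp only [Finset.mem_filter, Finset.mem_Ioc] at hp
    rw [Finset.mem_range, Nat.lt_succ_iff]
    exact Nat.log_mono_right hp.1.2

lemma natlog_le (N : ℕ) (hN : 3 ≤ N) : (Nat.log 2 N + 1 : ℝ) ≤ 3 * Real.log N := by
  have h1 : 1 ≤ Real.log N := by
    rw [Real.le_log_iff_exp_le (by positivity)]
    have := Real.exp_one_lt_d9
    have h3 : (3:ℝ) ≤ N := by exact_mod_cast hN
    linarith
  have h2 : (Nat.log 2 N : ℝ) * Real.log 2 ≤ Real.log N := by
    rw [← Real.log_pow]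
    apply Real.log_le_log (by positivity)
    exact_mod_cast Nat.pow_log_le_self 2 (by omega)
  have := Real.log_two_gt_d9
  have h3 : (0:ℝ) ≤ Nat.log 2 N := by positivity
  nlinarith

lemma TII_lim (α : ℝ) (hα : Irrational α) (ε : ℝ) (hε : 0 < ε) (hε1 : ε ≤ 1 / 64) (η : ℝ) (hη : 0 < η) :
    ∀ᶠ N : ℕ in atTop, ‖TII ((N:ℝ) ^ ε) α N‖ ≤ η * N := by
  obtain ⟨K, hK, hb1⟩ := block1
  set c1 : ℝ := 18 * (64 * K / ε) ^ 2 with hc1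
  have hc1p : 0 < c1 := by positivity
  obtain ⟨T, hT⟩ := gq_small (η / c1) (by positivity)
  obtain ⟨Q₀, hQ₀, hL⟩ := Apx_large α hα T
  have t1 : Tendsto (fun N : ℕ => (N:ℝ) ^ (ε / 64)) atTop atTop :=
    (tendsto_rpow_atTop (by positivity)).comp tendsto_natCast_atTop_atTop
  have t2 : Tendsto (fun N : ℕ => (N:ℝ) ^ (1 - ε / 2)) atTop atTop :=
    (tendsto_rpow_atTop (by linarith)).comp tendsto_natCast_atTop_atTop
  filter_upwards [t1.eventually_ge_atTop 2, t2.eventually_ge_atTop Q₀, t2.eventually_ge_atTop 1, eventually_ge_atTop 3,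
    pow_log_le (1 - ε / 32) (by linarith) 2 (η / 15) (by positivity)] with N hy hQ hQ1 hN3 hlast
  have hN0 : (0:ℝ) < N := by positivity
  set y : ℝ := (N:ℝ) ^ (ε / 64) with hydef
  have hy0 : 0 < y := by linarith
  have e64 : (N:ℝ) ^ ε = y ^ 64 := by
    rw [hydef, ← Real.rpow_natCast, ← Real.rpow_mul hN0.le]; congr 1; push_cast; ring
  have e32 : (N:ℝ) ^ (1 - ε / 2) = N / y ^ 32 := by
    rw [hydef, ← Real.rpow_natCast, ← Real.rpow_mul hN0.le, Real.rpow_sub hN0, Real.rpow_one]; congr 2; push_cast; ring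
  have e2 : (N:ℝ) ^ (1 - ε / 32) = N / y ^ 2 := by
    rw [hydef, ← Real.rpow_natCast, ← Real.rpow_mul hN0.le, Real.rpow_sub hN0, Real.rpow_one]; congr 2; push_cast; ring
  rw [e32] at hQ hQ1
  rw [e2] at hlast
  rw [e64]
  obtain ⟨q, hqQ, hA⟩ := Apx_exists α _ hQ1
  have hqT := hL _ hQ q hA
  have hq0 : 0 < q := hA.1
  have hqr : (0:ℝ) < q := by exact_mod_cast hq0
  have hlogN : 0 < Real.log N := Real.log_pos (by exact_mod_cast (by omega : 1 < N))
  have hnl := natlog_le N hN3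
  have hlogy : Real.log y = ε / 64 * Real.log N := by rw [hydef, Real.log_rpow hN0]
  have hg := gq_pos q hq0
  by_cases hq : (q:ℝ) ≤ y ^ 8
  · have hV0 : 0 ≤ K * gq q / Real.log y := by rw [hlogy]; positivity
    have := TII_blocks y α N hy (6 * Real.log N * N * (K * gq q / Real.log y) ^ 2 / √q) (by positivity) (by
      intro P hP hPN I hI hl
      refine (hb1 y α N P q hy hA hq hP hPN I (fun p => Real.log p) _ hI hl).trans ?_
      rw [div_pow _ (√(q:ℝ)), Real.sq_sqrt hqr.le]
      apply div_le_div_of_nonneg_right _ hqr.le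
      have : 0 ≤ Real.log N ^ 2 * N ^ 2 * (K * gq q / Real.log y) ^ 4 := by positivity
      calc _ = 32 * (Real.log N ^ 2 * N ^ 2 * (K * gq q / Real.log y) ^ 4) := by ring
        _ ≤ 36 * (Real.log N ^ 2 * N ^ 2 * (K * gq q / Real.log y) ^ 4) := by linarith
        _ = _ := by ring)
    refine this.trans ?_
    calc _ ≤ (3 * Real.log N) * (6 * Real.log N * N * (K * gq q / Real.log y) ^ 2 / √q) := by gcongr
      _ = c1 * (gq q ^ 2 / √q) * N := by
        rw [hlogy, hc1]; field_simp; norm_num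
      _ ≤ c1 * (η / c1) * N := by
        exact mul_le_mul_of_nonneg_right (mul_le_mul_of_nonneg_left (hT q hqT) hc1p.le) hN0.le
      _ = _ := by field_simp
  · push Not at hq
    have := TII_blocks y α N hy (5 * Real.log N * N / y ^ 2) (by positivity) (by
      intro P hP hPN I hI hl
      refine (block2 y α N P q hy hA hqQ hq hP hPN I (fun p => Real.log p) _ hI hl).trans ?_
      have : 0 ≤ Real.log N ^ 2 * N ^ 2 / y ^ 4 := by positivity
      calc _ = 20 * (Real.log N ^ 2 * N ^ 2 / y ^ 4) := by ring
        _ ≤ 25 * (Real.log N ^ 2 * N ^ 2 / y ^ 4) := by linarith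
        _ = _ := by field_simp; norm_num)
    refine this.trans ?_
    calc _ ≤ (3 * Real.log N) * (5 * Real.log N * N / y ^ 2) := by gcongr
      _ = 15 * (N / y ^ 2 * Real.log N ^ 2) := by ring
      _ ≤ 15 * (η / 15 * N) := by gcongr
      _ = _ := by ring

lemma theta_exp_lim (α : ℝ) (hα : Irrational α) (η : ℝ) (hη : 0 < η) :
    ∀ᶠ N : ℕ in atTop, ‖∑ p ∈ (Finset.Ioc 0 N).filter Nat.Prime, (Real.log p : ℂ) * ee (p * α)‖ ≤ η * N := by
  obtain ⟨ε, hε, hε1, hr⟩ := rough_lim α hα (η / 8) (by positivity)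
  have hl4 : 0 < Real.log 4 := Real.log_pos (by norm_num)
  filter_upwards [hr, TII_lim α hα ε hε hε1 (η / 4) (by positivity), pow_log_le (1 - ε) (by linarith) 1 (η / 8) (by positivity),
    pow_log_le ε (by linarith) 0 (η / (4 * Real.log 4)) (by positivity), eventually_ge_atTop 3] with N h1 h2 h3 h4 hN
  have hN0 : (0:ℝ) < N := by positivity
  have hN1 : (1:ℝ) ≤ N := by exact_mod_cast (by omega : 1 ≤ N)
  have hlogN : 0 < Real.log N := Real.log_pos (by exact_mod_cast (by omega : 1 < N))
  refine (theta_exp_le ((N:ℝ) ^ ε) α (Real.one_le_rpow hN1 hε.le) N).trans ?_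
  have a1 := abel_log _ _ N h1
  have b1 : 2 * (η / 8 * N / Real.log N) * Real.log N = η / 4 * N := by field_simp; ring
  rw [b1] at a1
  have b2 : 2 * N * Real.log N / (N:ℝ) ^ ε ≤ η / 4 * N := by
    rw [Real.rpow_sub hN0, Real.rpow_one, pow_one] at h3
    calc _ = 2 * (N / (N:ℝ) ^ ε * Real.log N) := by ring
      _ ≤ 2 * (η / 8 * N) := by gcongr
      _ = _ := by ring
  have b3 : Real.log 4 * (N:ℝ) ^ ε ≤ η / 4 * N := by
    rw [pow_zero, mul_one] at h4
    calc _ ≤ Real.log 4 * (η / (4 * Real.log 4) * N) := by gcongr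
      _ = _ := by field_simp
  linarith

lemma prime_exp_lim (α : ℝ) (hα : Irrational α) (η : ℝ) (hη : 0 < η) :
    ∀ᶠ N : ℕ in atTop, ‖∑ p ∈ (Finset.Ioc 0 N).filter Nat.Prime, ee (p * α)‖ ≤ η * N.primeCounting := by
  obtain ⟨C, hC, hO⟩ := Chebyshev.primeCounting_sub_theta_div_log_isBigO.exists_pos
  rw [Asymptotics.IsBigOWith] at hO
  have hO' := tendsto_natCast_atTop_atTop (R := ℝ) |>.eventually hO
  have hlt : Tendsto (fun N : ℕ => Real.log N) atTop atTop := Real.tendsto_log_atTop.comp tendsto_natCast_atTop_atTop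
  filter_upwards [hO', theta_exp_lim α hα (η / 8) (by positivity), hlt.eventually_ge_atTop (8 * C / η), eventually_ge_atTop 3,
    pow_log_le 0 (by norm_num) 1 (1/8) (by positivity)] with N h1 h2 h3 hN h4
  have hN0 : (0:ℝ) < N := by positivity
  have hN1 : (1:ℝ) ≤ N := by exact_mod_cast (by omega : 1 ≤ N)
  have hlogN : 0 < Real.log N := Real.log_pos (by exact_mod_cast (by omega : 1 < N))
  simp only [Nat.floor_natCast] at h1
  set S := ∑ p ∈ (Finset.Ioc 0 N).filter Nat.Prime, (Real.log p : ℂ) * ee (p * α)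
  set T := ∑ p ∈ (Finset.Ioc 0 N).filter Nat.Prime, ee (p * α) with hT
  have hcard : ((Finset.Ioc 0 N).filter Nat.Prime).card = N.primeCounting := by
    rw [← Nat.primesLE_card_eq_primeCounting]
    congr 1
    ext p
    simp [Nat.mem_primesLE]
    intro hp _ ; exact hp.pos
  have hdiff : ‖(Real.log N : ℂ) * T - S‖ ≤ N.primeCounting * Real.log N - Chebyshev.theta N := by
    rw [hT, Finset.mul_sum, ← Finset.sum_sub_distrib]
    refine (norm_sum_le _ _).trans (le_of_eq ?_)
    rw [Chebyshev.theta, Nat.floor_natCast, ← hcard, ← nsmul_eq_mul, ← Finset.sum_const, ← Finset.sum_sub_distrib]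
    apply Finset.sum_congr rfl
    intro p hp
    rw [Finset.mem_filter, Finset.mem_Ioc] at hp
    rw [← sub_mul, norm_mul, ee_norm, mul_one, ← Complex.ofReal_sub, Complex.norm_real, Real.norm_eq_abs, abs_of_nonneg]
    rw [sub_nonneg]
    apply Real.log_le_log
    · exact_mod_cast hp.1.1
    · exact_mod_cast hp.1.2
  have h5 : N.primeCounting * Real.log N - Chebyshev.theta N ≤ η / 8 * N := by
    rw [Real.norm_eq_abs, Real.norm_eq_abs, abs_of_nonneg (a := (N:ℝ) / Real.log N ^ 2) (by positivity)] at h1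
    have := (le_abs_self _).trans h1
    have h6 : C ≤ η / 8 * Real.log N := by
      rw [div_le_iff₀ hη] at h3; linarith
    calc _ = (N.primeCounting - Chebyshev.theta N / Real.log N) * Real.log N := by field_simp
      _ ≤ (C * (N / Real.log N ^ 2)) * Real.log N := by gcongr
      _ = C * (N / Real.log N) := by field_simp
      _ ≤ (η / 8 * Real.log N) * (N / Real.log N) := by gcongr
      _ = _ := by field_simp
  have h6 : Real.log N * ‖T‖ ≤ η / 4 * N := by
    calc Real.log N * ‖T‖ = ‖(Real.log N : ℂ) * T‖ := by
          rw [norm_mul, Complex.norm_real, Real.norm_eq_abs, abs_of_pos hlogN]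
      _ = ‖((Real.log N : ℂ) * T - S) + S‖ := by ring_nf
      _ ≤ _ := (norm_add_le _ _).trans (by linarith)
  have h7 := Chebyshev.pi_ge N
  rw [div_le_iff₀ hlogN] at h7
  have h8 : Real.log (N + 1) ≤ 2 * Real.log N := by
    rw [← Real.log_rpow hN0]
    apply Real.log_le_log (by positivity)
    norm_cast; nlinarith
  rw [Real.rpow_zero, one_mul, pow_one] at h4
  have h9 := Real.log_two_gt_d9
  have h10 : (N:ℝ) / 4 ≤ N.primeCounting * Real.log N := by nlinarith
  have h11 : Real.log N * ‖T‖ ≤ Real.log N * (η * N.primeCounting) := by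
    calc _ ≤ η / 4 * N := h6
      _ = η * (N / 4) := by ring
      _ ≤ η * (N.primeCounting * Real.log N) := by gcongr
      _ = _ := by ring
  exact le_of_mul_le_mul_left h11 hlogN

lemma weyl_sum (α : ℝ) (hα : Irrational α) :
    Tendsto (fun l : ℕ => (∑ j ∈ Finset.range l, ee ((Nat.nth Nat.Prime j : ℝ) * α)) / (l : ℂ)) atTop (nhds 0) := by
  rw [Metric.tendsto_atTop]
  intro η hη
  have h := prime_exp_lim α hα (η / 2) (by positivity)
  have t : Tendsto (fun l : ℕ => Nat.nth Nat.Prime (l - 1)) atTop atTop := by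
    have := (Nat.nth_strictMono Nat.infinite_setOf_prime).tendsto_atTop
    exact this.comp (tendsto_sub_atTop_nat 1)
  have h2 := (t.eventually h).and (eventually_ge_atTop 1)
  obtain ⟨l0, hl0⟩ := eventually_atTop.1 h2
  refine ⟨l0, fun l hl => ?_⟩
  obtain ⟨h3, hl1⟩ := hl0 l hl
  have hlr : (0:ℝ) < l := by exact_mod_cast hl1
  have hpc : (Nat.nth Nat.Prime (l - 1)).primeCounting = l := by
    rw [Nat.primeCounting, Nat.primeCounting', Nat.count_nth_succ_of_infinite Nat.infinite_setOf_prime]; omega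
  have hset : (Finset.Ioc 0 (Nat.nth Nat.Prime (l - 1))).filter Nat.Prime = (Finset.range l).image (Nat.nth Nat.Prime) := by
    ext p
    simp only [Finset.mem_filter, Finset.mem_Ioc, Finset.mem_image, Finset.mem_range]
    constructor
    · rintro ⟨⟨h5, h6⟩, hp⟩
      refine ⟨Nat.count Nat.Prime p, ?_, Nat.nth_count hp⟩
      have : Nat.nth Nat.Prime (Nat.count Nat.Prime p) ≤ Nat.nth Nat.Prime (l-1) := by rwa [Nat.nth_count hp]
      rw [Nat.nth_le_nth Nat.infinite_setOf_prime] at this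
      omega
    · rintro ⟨j, hj, rfl⟩
      have hp := Nat.prime_nth_prime j
      exact ⟨⟨hp.pos, (Nat.nth_le_nth Nat.infinite_setOf_prime).2 (by omega)⟩, hp⟩
  rw [hset, Finset.sum_image (fun a _ b _ hab => Nat.nth_injective Nat.infinite_setOf_prime hab), hpc] at h3
  rw [dist_zero_right, norm_div, Complex.norm_natCast, div_lt_iff₀ hlr]
  nlinarith

/-- interval mean of a function on the circle -/
noncomputable def circMean (F : C(UnitAddCircle, ℂ)) : ℂ := ∫ t in (0:ℝ)..1, F (t : UnitAddCircle)

/-- averages along a sequence -/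
noncomputable def seqMean (x : ℕ → ℝ) (F : C(UnitAddCircle, ℂ)) (l : ℕ) : ℂ :=
  (∑ j ∈ Finset.range l, F (x j : UnitAddCircle)) / (l : ℂ)

lemma circ_ii (F : C(UnitAddCircle, ℂ)) : IntervalIntegrable (fun t : ℝ => F (t : UnitAddCircle)) MeasureTheory.volume 0 1 :=
  (F.continuous.comp (AddCircle.continuous_mk' 1)).intervalIntegrable _ _

lemma circMean_sub_norm (F G : C(UnitAddCircle, ℂ)) : ‖circMean F - circMean G‖ ≤ ‖F - G‖ := by
  unfold circMean
  rw [← intervalIntegral.integral_sub (circ_ii F) (circ_ii G)]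
  have := intervalIntegral.norm_integral_le_of_norm_le_const (a := (0:ℝ)) (b := 1) (C := ‖F - G‖)
    (f := fun t : ℝ => F (t : UnitAddCircle) - G (t : UnitAddCircle)) (fun t _ => (F - G).norm_coe_le_norm t)
  simpa using this

lemma seqMean_sub_norm (x : ℕ → ℝ) (F G : C(UnitAddCircle, ℂ)) (l : ℕ) : ‖seqMean x F l - seqMean x G l‖ ≤ ‖F - G‖ := by
  unfold seqMean
  rw [← sub_div, ← Finset.sum_sub_distrib, norm_div, Complex.norm_natCast]
  rcases Nat.eq_zero_or_pos l with rfl | hl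
  · simp
  have hlr : (0:ℝ) < l := by exact_mod_cast hl
  rw [div_le_iff₀ hlr]
  refine (norm_sum_le _ _).trans ?_
  refine (Finset.sum_le_sum (fun j _ => (F - G).norm_coe_le_norm (x j : UnitAddCircle))).trans ?_
  rw [Finset.sum_const, Finset.card_range, nsmul_eq_mul, mul_comm]

lemma circMean_fourier (n : ℤ) (hn : n ≠ 0) : circMean (fourier n) = 0 := by
  unfold circMean
  have hc : (2 * Real.pi * Complex.I * n : ℂ) ≠ 0 := by
    simp [hn, Real.pi_ne_zero]
  have : ∀ t : ℝ, (fourier n (t : UnitAddCircle) : ℂ) = Complex.exp ((2 * Real.pi * Complex.I * n) * t) := by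
    intro t
    rw [fourier_coe_apply]; simp
  simp_rw [this]
  rw [integral_exp_mul_complex hc]
  have : Complex.exp ((2 * Real.pi * Complex.I * n) * (1:ℝ)) = 1 := by
    rw [Complex.exp_eq_one_iff]
    exact ⟨n, by push_cast; ring⟩
  rw [this]; simp

lemma weyl_cont (x : ℕ → ℝ) (h : ∀ n : ℤ, n ≠ 0 → Tendsto (fun l => seqMean x (fourier n) l) atTop (nhds 0))
    (F : C(UnitAddCircle, ℂ)) : Tendsto (fun l => seqMean x F l) atTop (nhds (circMean F)) := by
  have hspan : ∀ G ∈ Submodule.span ℂ (Set.range (@fourier 1)), Tendsto (fun l => seqMean x G l) atTop (nhds (circMean G)) := by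
    intro G hG
    induction hG using Submodule.span_induction with
    | mem G hG =>
      obtain ⟨n, rfl⟩ := hG
      by_cases hn : n = 0
      · subst hn
        have h1 : circMean (fourier 0) = 1 := by
          unfold circMean
          simp
        rw [h1]
        apply tendsto_const_nhds.congr'
        filter_upwards [eventually_ge_atTop 1] with l hl
        unfold seqMean
        have : (l:ℂ) ≠ 0 := by exact_mod_cast (by omega : l ≠ 0)
        simp [this]
      · rw [circMean_fourier n hn]; exact h n hn
    | zero =>
      have h1 : circMean 0 = 0 := by unfold circMean; simp
      rw [h1]
      apply tendsto_const_nhds.congr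
      intro l; unfold seqMean; simp
    | add G H _ _ hG hH =>
      have h1 : circMean (G + H) = circMean G + circMean H := by
        unfold circMean
        rw [← intervalIntegral.integral_add (circ_ii G) (circ_ii H)]; rfl
      rw [h1]
      apply (hG.add hH).congr
      intro l; unfold seqMean; rw [← add_div, ← Finset.sum_add_distrib]; rfl
    | smul c G _ hG =>
      have h1 : circMean (c • G) = c * circMean G := by
        unfold circMean
        rw [← intervalIntegral.integral_const_mul]; rfl
      rw [h1]
      apply (hG.const_mul c).congr
      intro l; unfold seqMean; rw [← mul_div_assoc, Finset.mul_sum]; rfl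
  rw [Metric.tendsto_atTop]
  intro η hη
  have hF : F ∈ (Submodule.span ℂ (Set.range (@fourier 1))).topologicalClosure := by
    rw [span_fourier_closure_eq_top]; trivial
  rw [← SetLike.mem_coe, Submodule.topologicalClosure_coe, Metric.mem_closure_iff] at hF
  obtain ⟨G, hG, hFG⟩ := hF (η / 3) (by positivity)
  rw [dist_eq_norm] at hFG
  obtain ⟨l0, hl0⟩ := Metric.tendsto_atTop.1 (hspan G hG) (η / 3) (by positivity)
  refine ⟨l0, fun l hl => ?_⟩
  have h1 := hl0 l hl
  have h2 := seqMean_sub_norm x F G l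
  have h3 := circMean_sub_norm F G
  rw [dist_eq_norm] at h1 ⊢
  have e : seqMean x F l - circMean F = (seqMean x F l - seqMean x G l) + (seqMean x G l - circMean G) - (circMean F - circMean G) := by ring
  rw [e]
  have h4 := norm_sub_le ((seqMean x F l - seqMean x G l) + (seqMean x G l - circMean G)) (circMean F - circMean G)
  have h5 := norm_add_le (seqMean x F l - seqMean x G l) (seqMean x G l - circMean G)
  linarith

/-- trapezoid -/
noncomputable def trap (a b δ : ℝ) (x : ℝ) : ℝ := max 0 (min 1 (min ((x - a) / δ) ((b - x) / δ)))

lemma trap_cont (a b δ : ℝ) : Continuous (trap a b δ) := by unfold trap; fun_prop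

lemma trap_nonneg (a b δ x : ℝ) : 0 ≤ trap a b δ x := le_max_left _ _

lemma trap_le (a b δ x : ℝ) (hδ : 0 < δ) : trap a b δ x ≤ if x ∈ Set.Ioo a b then 1 else 0 := by
  unfold trap
  split_ifs with h
  · exact max_le zero_le_one (min_le_left _ _)
  · apply max_le le_rfl
    rw [Set.mem_Ioo, not_and_or] at h
    push Not at h
    rcases h with h | h
    · exact (min_le_right _ _).trans ((min_le_left _ _).trans (div_nonpos_of_nonpos_of_nonneg (by linarith) hδ.le))
    · exact (min_le_right _ _).trans ((min_le_right _ _).trans (div_nonpos_of_nonpos_of_nonneg (by linarith) hδ.le))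

lemma trap_int (a b δ : ℝ) (ha : 0 ≤ a) (hb : b ≤ 1) (hδ : 0 < δ) (hab : a + δ ≤ b - δ) :
    b - a - 2 * δ ≤ ∫ t in (0:ℝ)..1, trap a b δ t := by
  have h1 : ∫ t in (a + δ)..(b - δ), (1:ℝ) ≤ ∫ t in (a + δ)..(b - δ), trap a b δ t := by
    apply intervalIntegral.integral_mono_on hab (by simp) ((trap_cont a b δ).intervalIntegrable _ _)
    intro x hx
    obtain ⟨h1, h2⟩ := hx
    unfold trap
    refine le_max_of_le_right (le_min le_rfl (le_min ?_ ?_))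
    · rw [le_div_iff₀ hδ]; linarith
    · rw [le_div_iff₀ hδ]; linarith
  have h2 : ∫ t in (a + δ)..(b - δ), trap a b δ t ≤ ∫ t in (0:ℝ)..1, trap a b δ t := by
    apply intervalIntegral.integral_mono_interval (by linarith) hab (by linarith)
    · exact Filter.Eventually.of_forall (fun x => trap_nonneg a b δ x)
    · exact (trap_cont a b δ).intervalIntegrable _ _
  rw [intervalIntegral.integral_const] at h1
  simp at h1
  linarith

/-- counting -/
noncomputable def cnt (x : ℕ → ℝ) (a b : ℝ) (l : ℕ) : ℕ :=
  ((Finset.range l).filter (fun j => Int.fract (x j) ∈ Set.Ioo a b)).card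

lemma cnt_lower (x : ℕ → ℝ) (h : ∀ n : ℤ, n ≠ 0 → Tendsto (fun l => seqMean x (fourier n) l) atTop (nhds 0))
    (a b : ℝ) (ha : 0 ≤ a) (hb : b ≤ 1) (η : ℝ) (hη : 0 < η) :
    ∀ᶠ l : ℕ in atTop, (b - a - η) ≤ cnt x a b l / (l : ℝ) := by
  by_cases hab : a + η ≤ b
  swap
  · filter_upwards with l
    have : (0:ℝ) ≤ cnt x a b l / (l : ℝ) := by positivity
    linarith
  set δ := η / 4 with hδ
  have hδ0 : 0 < δ := by positivity
  have hI := trap_int a b δ ha hb hδ0 (by linarith)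
  set g : ℝ → ℂ := fun t => (trap a b δ t : ℂ) with hg
  have g0 : trap a b δ 0 = 0 := by
    apply le_antisymm _ (trap_nonneg _ _ _ _)
    refine (trap_le a b δ 0 hδ0).trans ?_
    rw [if_neg]
    intro h; exact absurd h.1 (by linarith)
  have g1 : trap a b δ 1 = 0 := by
    apply le_antisymm _ (trap_nonneg _ _ _ _)
    refine (trap_le a b δ 1 hδ0).trans ?_
    rw [if_neg]
    intro h; exact absurd h.2 (by linarith)
  have hcont : Continuous (AddCircle.liftIco (1:ℝ) 0 g) := by
    apply AddCircle.liftIco_zero_continuous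
    · simp [hg, g0, g1]
    · exact (Complex.continuous_ofReal.comp (trap_cont a b δ)).continuousOn
  let F : C(UnitAddCircle, ℂ) := ⟨AddCircle.liftIco (1:ℝ) 0 g, hcont⟩
  have hF2 : ∀ t : ℝ, F (t : UnitAddCircle) = g (Int.fract t) := by
    intro t
    have e : (t : UnitAddCircle) = ((Int.fract t : ℝ) : UnitAddCircle) := (AddCircle.coe_fract t).symm
    rw [e]
    change AddCircle.liftIco (1:ℝ) 0 g _ = _
    exact AddCircle.liftIco_zero_coe_apply ⟨Int.fract_nonneg t, Int.fract_lt_one t⟩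
  have hmean : circMean F = ((∫ t in (0:ℝ)..1, trap a b δ t : ℝ) : ℂ) := by
    unfold circMean
    rw [← intervalIntegral.integral_ofReal]
    apply intervalIntegral.integral_congr
    intro t ht
    rw [Set.uIcc_of_le zero_le_one] at ht
    change F (t : UnitAddCircle) = g t
    rw [hF2]
    rcases eq_or_lt_of_le ht.2 with h1 | h1
    · rw [h1]; simp [hg, g0, g1]
    · rw [Int.fract_eq_self.2 ⟨ht.1, h1⟩]
  have hseq : ∀ l, seqMean x F l = (((∑ j ∈ Finset.range l, trap a b δ (Int.fract (x j))) / l : ℝ) : ℂ) := by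
    intro l
    unfold seqMean
    push_cast
    congr 1
    exact Finset.sum_congr rfl (fun j _ => hF2 (x j))
  have hlim := weyl_cont x h F
  rw [Metric.tendsto_atTop] at hlim
  obtain ⟨l0, hl0⟩ := hlim δ hδ0
  filter_upwards [eventually_ge_atTop l0] with l hl
  have h1 := hl0 l hl
  rw [hmean, hseq, Complex.dist_eq, ← Complex.ofReal_sub, Complex.norm_real, Real.norm_eq_abs] at h1
  have h2 := (abs_lt.1 h1).1
  have h3 : (∑ j ∈ Finset.range l, trap a b δ (Int.fract (x j))) / l ≤ cnt x a b l / (l:ℝ) := by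
    apply div_le_div_of_nonneg_right _ (by positivity)
    unfold cnt
    rw [Finset.cast_card, Finset.sum_filter]
    exact Finset.sum_le_sum (fun j _ => trap_le a b δ _ hδ0)
  linarith

lemma cnt_lim (x : ℕ → ℝ) (h : ∀ n : ℤ, n ≠ 0 → Tendsto (fun l => seqMean x (fourier n) l) atTop (nhds 0))
    (a b : ℝ) (ha : 0 ≤ a) (hab : a < b) (hb : b ≤ 1) :
    Tendsto (fun l : ℕ => cnt x a b l / (l : ℝ)) atTop (nhds (b - a)) := by
  rw [Metric.tendsto_atTop]
  intro η hη
  have h1 := cnt_lower x h a b ha hb (η / 4) (by positivity)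
  have h2 := cnt_lower x h 0 a le_rfl (by linarith) (η / 4) (by positivity)
  have h3 := cnt_lower x h b 1 (by linarith) le_rfl (η / 4) (by positivity)
  obtain ⟨l0, hl0⟩ := eventually_atTop.1 (h1.and (h2.and (h3.and (eventually_ge_atTop 1))))
  refine ⟨l0, fun l hl => ?_⟩
  obtain ⟨e1, e2, e3, hl1⟩ := hl0 l hl
  have hlr : (0:ℝ) < l := by exact_mod_cast hl1
  have hsum : cnt x a b l + cnt x 0 a l + cnt x b 1 l ≤ l := by
    unfold cnt
    rw [← Finset.card_union_of_disjoint, ← Finset.card_union_of_disjoint]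
    · conv_rhs => rw [← Finset.card_range l]
      apply Finset.card_le_card
      intro j hj
      simp only [Finset.mem_union, Finset.mem_filter] at hj
      tauto
    · rw [Finset.disjoint_left]
      intro j hj hj2
      simp only [Finset.mem_union, Finset.mem_filter, Set.mem_Ioo] at hj hj2
      rcases hj with hj | hj <;> linarith [hj.2.2, hj2.2.1]
    · rw [Finset.disjoint_left]
      intro j hj hj2
      simp only [Finset.mem_filter, Set.mem_Ioo] at hj hj2
      linarith [hj.2.1, hj2.2.2]
  have hs : (cnt x a b l : ℝ) + cnt x 0 a l + cnt x b 1 l ≤ l := by exact_mod_cast hsum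
  have hs2 : (cnt x a b l : ℝ) / l + cnt x 0 a l / l + cnt x b 1 l / l ≤ 1 := by
    rw [← add_div, ← add_div, div_le_one hlr]; exact hs
  rw [Real.dist_eq, abs_lt]
  constructor <;> linarith

/-- Vinogradov's prime equidistribution theorem. -/
theorem stmt1 (θ : ℝ) (hθ : Irrational θ) :
    ∀ a b : ℝ, 0 ≤ a → a < b → b ≤ 1 →
      Tendsto (fun ℓ : ℕ =>
        ((Finset.range ℓ).filter (fun j =>
          Int.fract ((Nat.nth Nat.Prime j : ℝ) * θ) ∈ Set.Ioo a b)).card / (ℓ : ℝ))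
        atTop (nhds (b - a)) := by
  intro a b ha hab hb
  apply cnt_lim (fun j => (Nat.nth Nat.Prime j : ℝ) * θ) _ a b ha hab hb
  intro n hn
  have := weyl_sum (n * θ) (hθ.intCast_mul hn)
  refine this.congr ?_
  intro l
  unfold seqMean
  congr 1
  apply Finset.sum_congr rfl
  intro j _
  rw [fourier_coe_apply]
  unfold ee
  congr 1
  push_cast
  ring
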